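/- arXiv:1706.06036 — 3 statements merged into one kernel-verified Lean document; each statement's English description precedes it below -/
import Mathlib

section
/- Let Γ be a distance-regular graph with diameter D = 3 and valency k satisfying 3 ≤ k < 3(a_1+1), and suppose Γ contains a 3-claw but no 4-claws. Then θ_2 ≥ −1, where k = θ_0 > θ_1 > θ_2 > θ_3 are the four distinct eigenvalues of the adjacency matrix of Γ. -/
/-!
The eigenvalues of `Γ` other than `k` are the roots of a monic cubic `P` with
`P (-1) = b₁ (k - c₃ + 1 - b₂)` that takes a nonpositive value somewhere above `-1`. Hence
`θ₂ < -1` would force `P (-1) < 0`, that is, `b₂ + c₃ ≥ k + 2`.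

This inequality makes the neighbours of `v` at distance 3 from `u`, where `dist u v = 2`, contain
two nonadjacent vertices. As there are no 4-claws, the common neighbours of `u` and `v` then form a
clique. The local graph of a vertex is therefore regular of valency `a₁`, any two nonadjacent
vertices of it have `m = c₂ - 1` common neighbours, and these form a clique. It has an independent
set of size 3, but none of size 4.

If `m = 0`, the closed neighbourhoods of an independent 3-set are disjoint, so `k ≥ 3 (a₁ + 1)`.
If `m > 0`, a weighted double count shows that the number of neighbours of `u` outside the closed
neighbourhood of `w` takes a single nonzero value over all edges `wu`. So all classes of vertices
with equal closed neighbourhoods have the same size `s`. The number `t` of common neighbours of an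
independent 3-set, and the other parameters counted below, are multiples of `s`; comparing them
gives first `t = 0` and then a contradiction.
-/

open SimpleGraph Finset

/-- `G` is a distance-regular graph with diameter `D` and intersection numbers
`b i` (number of neighbours of `y` at distance `i+1` from `x` when `dist x y = i`) and
`c i` (number of neighbours of `y` at distance `i-1` from `x` when `dist x y = i`). -/
def IsDRG {V : Type*} [Fintype V] (G : SimpleGraph V) (D : ℕ) (b c : ℕ → ℕ) : Prop :=
  G.Connected ∧
  (∃ x y : V, G.dist x y = D) ∧
  (∀ x y : V, G.dist x y ≤ D) ∧
  c 0 = 0 ∧ c 1 = 1 ∧ b D = 0 ∧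
  (∀ i ≤ D, ∀ x y : V, G.dist x y = i →
    {z : V | G.Adj y z ∧ G.dist x z = i - 1}.ncard = c i ∧
    {z : V | G.Adj y z ∧ G.dist x z = i + 1}.ncard = b i)

/-- `G` contains a `t`-claw: a vertex together with `t` pairwise nonadjacent neighbours
(an induced `K_{1,t}`). -/
def HasClaw {V : Type*} (G : SimpleGraph V) (t : ℕ) : Prop :=
  ∃ (x : V) (s : Finset V), s.card = t ∧ (∀ y ∈ s, G.Adj x y) ∧
    (s : Set V).Pairwise fun y z => ¬ G.Adj y z

/-- `θ` is an eigenvalue of the (real) adjacency matrix of `G`. -/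
def IsAdjEigenvalue {V : Type*} [Fintype V] (G : SimpleGraph V) [DecidableRel G.Adj]
    (θ : ℝ) : Prop :=
  ∃ v : V → ℝ, v ≠ 0 ∧ (G.adjMatrix ℝ).mulVec v = θ • v

/-- `G` contains an induced quadrangle: vertices `x, z₁, y, z₂` with
`dist x y = dist z₁ z₂ = 2` inducing a 4-cycle. -/
def HasQuadrangle {V : Type*} (G : SimpleGraph V) : Prop :=
  ∃ x z₁ y z₂ : V, G.dist x y = 2 ∧ G.dist z₁ z₂ = 2 ∧
    G.Adj x z₁ ∧ G.Adj z₁ y ∧ G.Adj y z₂ ∧ G.Adj z₂ x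

/-- The diameter-3 intersection array `{β₀,β₁,β₂; γ₁,γ₂,γ₃}`. -/
def arr3 (b c : ℕ → ℕ) (β₀ β₁ β₂ γ₁ γ₂ γ₃ : ℕ) : Prop :=
  b 0 = β₀ ∧ b 1 = β₁ ∧ b 2 = β₂ ∧ c 1 = γ₁ ∧ c 2 = γ₂ ∧ c 3 = γ₃

section DoubleCounting

variable {α β : Type*}

/- Give each related pair `(a, b)` the weight `1 / deg a = 1 / deg b`: the total weight counts both
sides. -/
theorem card_eq_card_of_degree_eq (r : α → β → Prop) [∀ a b, Decidable (r a b)] {A : Finset α}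
    {B : Finset β} (hA : ∀ a ∈ A, #(B.bipartiteAbove r a) ≠ 0)
    (hB : ∀ b ∈ B, #(A.bipartiteBelow r b) ≠ 0)
    (h : ∀ a ∈ A, ∀ b ∈ B, r a b → #(B.bipartiteAbove r a) = #(A.bipartiteBelow r b)) :
    #A = #B := by
  suffices (#A : ℚ) = #B from mod_cast this
  calc (#A : ℚ)
      = ∑ a ∈ A, ∑ _b ∈ B.bipartiteAbove r a, (#(B.bipartiteAbove r a) : ℚ)⁻¹ := by
        rw [cast_card]
        refine sum_congr rfl fun a ha ↦ ?_
        rw [sum_const, nsmul_eq_mul, mul_inv_cancel₀ (mod_cast hA a ha)]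
    _ = ∑ a ∈ A, ∑ b ∈ B.bipartiteAbove r a, (#(A.bipartiteBelow r b) : ℚ)⁻¹ := by
        refine sum_congr rfl fun a ha ↦ sum_congr rfl fun b hb ↦ ?_
        rw [mem_bipartiteAbove] at hb
        rw [h a ha b hb.1 hb.2]
    _ = ∑ b ∈ B, ∑ _a ∈ A.bipartiteBelow r b, (#(A.bipartiteBelow r b) : ℚ)⁻¹ :=
        sum_sum_bipartiteAbove_eq_sum_sum_bipartiteBelow r fun _ b ↦
          (#(A.bipartiteBelow r b) : ℚ)⁻¹
    _ = #B := by
        rw [cast_card]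
        refine sum_congr rfl fun b hb ↦ ?_
        rw [sum_const, nsmul_eq_mul, mul_inv_cancel₀ (mod_cast hB b hb)]

theorem dvd_card_of_card_fiber_eq [Fintype α] [DecidableEq β] {f : α → β} {s : ℕ}
    (hf : ∀ x, #{y | f y = f x} = s) {S : Finset α} (hS : ∀ x ∈ S, ∀ y, f y = f x → y ∈ S) :
    s ∣ #S := by
  rw [card_eq_sum_card_image f]
  refine dvd_sum fun z hz ↦ ?_
  obtain ⟨x, hx, rfl⟩ := mem_image.mp hz
  have hfiber : S.filter (f · = f x) = univ.filter (f · = f x) := by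
    ext y
    simpa using hS x hx y
  rw [hfiber, hf]

end DoubleCounting

theorem not_compl_adj_of_indepSetFree_four {W : Type*} {H : SimpleGraph W} (h4 : H.IndepSetFree 4)
    {u v w z : W} (huv : Hᶜ.Adj u v) (huw : Hᶜ.Adj u w) (hvw : Hᶜ.Adj v w) (huz : Hᶜ.Adj u z)
    (hvz : Hᶜ.Adj v z) : ¬ Hᶜ.Adj w z := by
  classical
  intro hwz
  refine ((cliqueFree_compl (G := H)).mpr h4) {z, u, v, w} ?_
  refine (is3Clique_triple_iff.mpr ⟨huv, huw, hvw⟩).insert ?_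
  simp only [mem_insert, mem_singleton]
  rintro x (rfl | rfl | rfl) <;> exact Hᶜ.adj_symm ‹_›

/-- A regular graph of valency `a` in which any two distinct nonadjacent vertices have exactly `m`
common neighbours, and these form a clique. Neither connectedness nor a bound on the diameter is
required. -/
structure IsRegularTerwilliger {W : Type*} [Fintype W] [DecidableEq W] (H : SimpleGraph W)
    [DecidableRel H.Adj] (a m : ℕ) : Prop where
  regular : H.IsRegularOfDegree a
  card_inter : ∀ {u v}, Hᶜ.Adj u v → #(H.neighborFinset u ∩ H.neighborFinset v) = m
  isClique : ∀ {u v}, Hᶜ.Adj u v → H.IsClique (H.commonNeighbors u v)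

namespace IsRegularTerwilliger

variable {W : Type*} [Fintype W] [DecidableEq W] (H : SimpleGraph W) [DecidableRel H.Adj]

/-- The number of neighbours of `u` outside the closed neighbourhood of `w`, that is, adjacent to
`w` in the complement. -/
def outDegree (w u : W) : ℕ := #(H.neighborFinset u ∩ Hᶜ.neighborFinset w)

/-- The vertices with the same closed neighbourhood as `x`, encoded through its complement. -/
def twinClass (x : W) : Finset W := {y | Hᶜ.neighborFinset y = Hᶜ.neighborFinset x}

variable {H} {a m : ℕ}

section OutDegree

theorem outDegree_add_card_inter (hH : IsRegularTerwilliger H a m) {w u : W} (h : H.Adj w u) :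
    outDegree H w u + #(H.neighborFinset w ∩ H.neighborFinset u) + 1 = a := by
  have hsplit : H.neighborFinset u =
      insert w (H.neighborFinset u ∩ Hᶜ.neighborFinset w ∪
        H.neighborFinset w ∩ H.neighborFinset u) := by
    ext z
    simp only [mem_neighborFinset, mem_insert, mem_union, mem_inter, compl_adj]
    grind [H.adj_comm]
  have hdisj : Disjoint (H.neighborFinset u ∩ Hᶜ.neighborFinset w)
      (H.neighborFinset w ∩ H.neighborFinset u) := by
    simp only [Finset.disjoint_left, mem_inter, mem_neighborFinset, compl_adj]
    tauto
  have hcard := congrArg card hsplit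
  rw [card_insert_of_notMem (by simp), card_union_of_disjoint hdisj, card_neighborFinset_eq_degree,
    hH.regular u] at hcard
  exact hcard.symm

theorem outDegree_comm (hH : IsRegularTerwilliger H a m) {w u : W} (h : H.Adj w u) :
    outDegree H w u = outDegree H u w := by
  have hwu := hH.outDegree_add_card_inter h
  have huw := hH.outDegree_add_card_inter h.symm
  rw [inter_comm] at huw
  omega

theorem not_compl_adj_of_adj (hH : IsRegularTerwilliger H a m) {u v x y : W}
    (huv : Hᶜ.Adj u v) (hux : H.Adj u x) (hvx : H.Adj v x) (huy : H.Adj u y) (hvy : H.Adj v y) :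
    ¬ Hᶜ.Adj x y := fun hxy ↦
  hxy.2 <| hH.isClique huv (H.mem_commonNeighbors.mpr ⟨hux, hvx⟩)
    (H.mem_commonNeighbors.mpr ⟨huy, hvy⟩) hxy.1

section FarNeighbours

variable {u v w : W}

theorem compl_adj_of_mem_inter (hH : IsRegularTerwilliger H a m) (huv : Hᶜ.Adj u v)
    (hu : H.Adj w u) (hv : H.Adj w v) {z : W}
    (hz : z ∈ H.neighborFinset u ∩ Hᶜ.neighborFinset w) : Hᶜ.Adj z v := by
  simp only [mem_inter, mem_neighborFinset] at hz
  refine ⟨fun h ↦ huv.2 (h ▸ hz.1), fun h ↦ ?_⟩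
  exact hH.not_compl_adj_of_adj huv hu.symm hv.symm hz.1 h.symm hz.2

/- The vertices `z` and `x` are common neighbours of `u` and `y`, hence adjacent. -/
theorem adj_of_adj_inter (hH : IsRegularTerwilliger H a m) (huv : Hᶜ.Adj u v)
    (hu : H.Adj w u) (hv : H.Adj w v) {z : W}
    (hz : z ∈ H.neighborFinset u ∩ Hᶜ.neighborFinset w) {y x : W} (hzy : H.Adj z y)
    (hvy : H.Adj v y) (huy : ¬ H.Adj u y) (hux : H.Adj u x) (hvx : H.Adj v x) (hyx : H.Adj y x) :
    H.Adj z x := by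
  have hzv := hH.compl_adj_of_mem_inter huv hu hv hz
  simp only [mem_inter, mem_neighborFinset] at hz
  by_contra hzx
  refine hH.not_compl_adj_of_adj (u := u) (v := y)
    ⟨fun h ↦ huv.2 (h ▸ hvy.symm), huy⟩ hz.1 hzy.symm hux hyx ⟨?_, hzx⟩
  rintro rfl
  exact hzv.2 hvx.symm

theorem compl_adj_iff_not_adj (hH : IsRegularTerwilliger H a m) (huv : Hᶜ.Adj u v)
    (hu : H.Adj w u) (hv : H.Adj w v) {z : W}
    (hz : z ∈ H.neighborFinset u ∩ Hᶜ.neighborFinset w) {y : W} (hzy : H.Adj z y)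
    (hvy : H.Adj v y) : Hᶜ.Adj w y ↔ ¬ H.Adj u y := by
  refine ⟨fun hwy huy ↦ ?_, fun huy ↦ ⟨?_, fun hwy ↦ ?_⟩⟩
  · exact hH.not_compl_adj_of_adj huv hu.symm hv.symm huy hvy hwy
  · rintro rfl
    exact huy hu.symm
  · have := hH.adj_of_adj_inter huv hu hv hz hzy hvy huy hu.symm hv.symm hwy.symm
    simp only [mem_inter, mem_neighborFinset] at hz
    exact hz.2.2 this.symm

theorem card_bipartiteAbove_add_card (hH : IsRegularTerwilliger H a m) (huv : Hᶜ.Adj u v)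
    (hu : H.Adj w u) (hv : H.Adj w v) {z : W}
    (hz : z ∈ H.neighborFinset u ∩ Hᶜ.neighborFinset w) :
    #((H.neighborFinset v ∩ Hᶜ.neighborFinset w).bipartiteAbove H.Adj z) +
      #(H.neighborFinset u ∩ H.neighborFinset v ∩ H.neighborFinset z) = m := by
  rw [← hH.card_inter (hH.compl_adj_of_mem_inter huv hu hv hz), ← card_union_of_disjoint]
  · congr 1
    ext y
    have := fun h₁ h₂ ↦ hH.compl_adj_iff_not_adj huv hu hv hz (y := y) h₁ h₂
    simp only [bipartiteAbove, mem_union, mem_filter, mem_inter, mem_neighborFinset]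
    tauto
  · simp only [Finset.disjoint_left, bipartiteAbove, mem_filter, mem_inter, mem_neighborFinset]
    rintro y ⟨⟨hvy, hwy⟩, -⟩ ⟨⟨huy, -⟩, -⟩
    exact hH.not_compl_adj_of_adj huv hu.symm hv.symm huy hvy hwy

theorem card_bipartiteAbove_ne_zero (hH : IsRegularTerwilliger H a m) (huv : Hᶜ.Adj u v)
    (hu : H.Adj w u) (hv : H.Adj w v) {z : W}
    (hz : z ∈ H.neighborFinset u ∩ Hᶜ.neighborFinset w) :
    #((H.neighborFinset v ∩ Hᶜ.neighborFinset w).bipartiteAbove H.Adj z) ≠ 0 := by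
  have hlt : #(H.neighborFinset u ∩ H.neighborFinset v ∩ H.neighborFinset z) < m := by
    rw [← hH.card_inter huv]
    refine card_lt_card ((ssubset_iff_of_subset inter_subset_left).mpr ⟨w, ?_, ?_⟩)
    · simp [hu.symm, hv.symm]
    · simp only [mem_inter, mem_neighborFinset] at hz ⊢
      exact fun h ↦ hz.2.2 h.2.symm
  have := hH.card_bipartiteAbove_add_card huv hu hv hz
  omega

theorem inter_subset_inter_of_adj (hH : IsRegularTerwilliger H a m) (huv : Hᶜ.Adj u v)
    (hu : H.Adj w u) (hv : H.Adj w v) {z y : W}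
    (hz : z ∈ H.neighborFinset u ∩ Hᶜ.neighborFinset w)
    (hy : y ∈ H.neighborFinset v ∩ Hᶜ.neighborFinset w) (hzy : H.Adj z y) :
    H.neighborFinset u ∩ H.neighborFinset v ∩ H.neighborFinset y ⊆
      H.neighborFinset u ∩ H.neighborFinset v ∩ H.neighborFinset z := by
  have huy : ¬ H.Adj u y := fun h ↦
    (hH.compl_adj_of_mem_inter huv.symm hv hu hy).2 h.symm
  intro x
  simp only [mem_inter, mem_neighborFinset] at hy ⊢
  rintro ⟨⟨hux, hvx⟩, hyx⟩
  exact ⟨⟨hux, hvx⟩, hH.adj_of_adj_inter huv hu hv hz hzy hy.1 huy hux hvx hyx⟩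

theorem outDegree_eq_of_compl_adj (hH : IsRegularTerwilliger H a m) (huv : Hᶜ.Adj u v)
    (hu : H.Adj w u) (hv : H.Adj w v) : outDegree H w u = outDegree H w v := by
  have below (y : W) : (H.neighborFinset u ∩ Hᶜ.neighborFinset w).bipartiteBelow H.Adj y =
      (H.neighborFinset u ∩ Hᶜ.neighborFinset w).bipartiteAbove H.Adj y := by
    simp only [bipartiteBelow, bipartiteAbove, H.adj_comm]
  refine card_eq_card_of_degree_eq H.Adj
    (fun z hz ↦ hH.card_bipartiteAbove_ne_zero huv hu hv hz) (fun y hy ↦ ?_) fun z hz y hy hzy ↦ ?_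
  · rw [below]
    exact hH.card_bipartiteAbove_ne_zero huv.symm hv hu hy
  · have hz' := hH.card_bipartiteAbove_add_card huv hu hv hz
    have hy' := hH.card_bipartiteAbove_add_card huv.symm hv hu hy
    have hle := card_le_card (hH.inter_subset_inter_of_adj huv hu hv hz hy hzy)
    have hge := card_le_card (hH.inter_subset_inter_of_adj huv.symm hv hu hy hz hzy.symm)
    rw [inter_comm (H.neighborFinset v)] at hge hy'
    rw [below]
    omega

end FarNeighbours

theorem exists_compl_adj_of_outDegree_ne_zero (hH : IsRegularTerwilliger H a m) {w u : W}
    (hu : H.Adj w u) (h : outDegree H w u ≠ 0) : ∃ z, H.Adj w z ∧ Hᶜ.Adj u z := by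
  rw [hH.outDegree_comm hu, outDegree, card_ne_zero] at h
  obtain ⟨z, hz⟩ := h
  exact ⟨z, by simpa only [mem_inter, mem_neighborFinset] using hz⟩

/- If the out-degrees differed, `u` and `z` would both be adjacent to `v` and `y`, so the common
neighbours `v` and `y` of `u` and `z` would be adjacent. -/
theorem outDegree_eq_of_ne_zero (hH : IsRegularTerwilliger H a m) {w u v : W} (hu : H.Adj w u)
    (hv : H.Adj w v) (hu₀ : outDegree H w u ≠ 0) (hv₀ : outDegree H w v ≠ 0) :
    outDegree H w u = outDegree H w v := by
  obtain ⟨z, hz, huz⟩ := hH.exists_compl_adj_of_outDegree_ne_zero hu hu₀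
  obtain ⟨y, hy, hvy⟩ := hH.exists_compl_adj_of_outDegree_ne_zero hv hv₀
  have huz' := hH.outDegree_eq_of_compl_adj huz hu hz
  have hvy' := hH.outDegree_eq_of_compl_adj hvy hv hy
  by_contra hne
  have adj_of_ne {p q : W} (hp : H.Adj w p) (hq : H.Adj w q)
      (hpq : outDegree H w p ≠ outDegree H w q) : H.Adj p q := by
    by_contra h
    exact hpq (hH.outDegree_eq_of_compl_adj ⟨fun e ↦ hpq (e ▸ rfl), h⟩ hp hq)
  exact hH.not_compl_adj_of_adj huz (adj_of_ne hu hv hne) (adj_of_ne hz hv (by omega))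
    (adj_of_ne hu hy (by omega)) (adj_of_ne hz hy (by omega)) hvy

theorem outDegree_eq_zero_iff (hH : IsRegularTerwilliger H a m) {w u : W} (hu : H.Adj w u) :
    outDegree H w u = 0 ↔ Hᶜ.neighborFinset w = Hᶜ.neighborFinset u := by
  have hcard : #(Hᶜ.neighborFinset u) ≤ #(Hᶜ.neighborFinset w) := by
    rw [card_neighborFinset_eq_degree, card_neighborFinset_eq_degree, degree_compl, degree_compl,
      hH.regular, hH.regular]
  rw [outDegree, card_eq_zero, ← Finset.disjoint_iff_inter_eq_empty, Finset.disjoint_right]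
  refine ⟨fun h ↦ eq_of_subset_of_card_le (fun z hz ↦ ?_) hcard, fun h z hz ↦ ?_⟩
  · have huz := h hz
    simp only [mem_neighborFinset, compl_adj] at hz huz ⊢
    exact ⟨fun e ↦ hz.2 (e ▸ hu), huz⟩
  · rw [h] at hz
    simp only [mem_neighborFinset, compl_adj] at hz ⊢
    exact hz.2

theorem exists_adj_of_compl_adj (hH : IsRegularTerwilliger H a m) (hm : m ≠ 0) {u v : W}
    (huv : Hᶜ.Adj u v) : ∃ e, H.Adj u e ∧ H.Adj v e := by
  rw [← hH.card_inter huv, card_ne_zero] at hm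
  obtain ⟨e, he⟩ := hm
  exact ⟨e, by simpa only [mem_inter, mem_neighborFinset] using he⟩

theorem outDegree_ne_zero_of_compl_adj {u v e : W} (huv : Hᶜ.Adj u v) (hv : H.Adj v e) :
    outDegree H u e ≠ 0 :=
  card_ne_zero_of_mem (a := v) (by simp only [mem_inter, mem_neighborFinset]; exact ⟨hv.symm, huv⟩)

/- Any two vertices have a common neighbour or are joined by an edge, and out-degrees are symmetric,
so the common value at one vertex propagates to the whole graph. -/
theorem outDegree_eq_outDegree (hH : IsRegularTerwilliger H a m) (hm : m ≠ 0)
    {w u x y : W} (hwu : H.Adj w u) (hwu₀ : outDegree H w u ≠ 0) (hxy : H.Adj x y)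
    (hxy₀ : outDegree H x y ≠ 0) : outDegree H w u = outDegree H x y := by
  by_cases hwx : w = x
  · subst hwx
    exact hH.outDegree_eq_of_ne_zero hwu hxy hwu₀ hxy₀
  by_cases hadj : H.Adj w x
  · have hcomm := hH.outDegree_comm hadj
    by_cases hwx₀ : outDegree H w x = 0
    · have htwin := (hH.outDegree_eq_zero_iff hadj).mp hwx₀
      have hyw : H.Adj w y := by
        by_contra h
        have : y ∈ Hᶜ.neighborFinset w := by
          rw [mem_neighborFinset, compl_adj]
          refine ⟨?_, h⟩
          rintro rfl
          exact hxy₀ (hcomm ▸ hwx₀)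
        rw [htwin, mem_neighborFinset] at this
        exact this.2 hxy
      have hwy : outDegree H w y = outDegree H x y := by rw [outDegree, htwin, outDegree]
      exact (hH.outDegree_eq_of_ne_zero hwu hyw hwu₀ (hwy ▸ hxy₀)).trans hwy
    · exact (hH.outDegree_eq_of_ne_zero hwu hadj hwu₀ hwx₀).trans <|
        hcomm.trans (hH.outDegree_eq_of_ne_zero hadj.symm hxy (hcomm ▸ hwx₀) hxy₀)
  · have hfar : Hᶜ.Adj w x := ⟨hwx, hadj⟩
    obtain ⟨e, hwe, hxe⟩ := hH.exists_adj_of_compl_adj hm hfar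
    calc outDegree H w u
        = outDegree H w e :=
          hH.outDegree_eq_of_ne_zero hwu hwe hwu₀ (outDegree_ne_zero_of_compl_adj hfar hxe)
      _ = outDegree H e w := hH.outDegree_comm hwe
      _ = outDegree H e x := hH.outDegree_eq_of_compl_adj hfar hwe.symm hxe.symm
      _ = outDegree H x e := hH.outDegree_comm hxe.symm
      _ = outDegree H x y := hH.outDegree_eq_of_ne_zero hxe hxy
          (outDegree_ne_zero_of_compl_adj hfar.symm hwe) hxy₀

theorem exists_outDegree_eq (hH : IsRegularTerwilliger H a m) (hm : m ≠ 0) {u v : W}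
    (huv : Hᶜ.Adj u v) :
    ∃ δ ≠ 0, ∀ x y, H.Adj x y → outDegree H x y ≠ 0 → outDegree H x y = δ := by
  obtain ⟨e, hue, hve⟩ := hH.exists_adj_of_compl_adj hm huv
  have hne := outDegree_ne_zero_of_compl_adj huv hve
  exact ⟨outDegree H u e, hne, fun x y hxy hxy₀ ↦ hH.outDegree_eq_outDegree hm hxy hxy₀ hue hne⟩

end OutDegree

section Counting

variable {u v w : W}

theorem card_compl_neighborFinset (hH : IsRegularTerwilliger H a m) (x : W) :
    #(Hᶜ.neighborFinset x) + (a + 1) = Fintype.card W := by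
  have := H.degree_lt_card_verts x
  rw [card_neighborFinset_eq_degree, degree_compl, hH.regular x] at *
  omega

theorem compl_union_compl_neighborFinset (huv : Hᶜ.Adj u v) :
    (Hᶜ.neighborFinset u ∪ Hᶜ.neighborFinset v)ᶜ = H.neighborFinset u ∩ H.neighborFinset v := by
  ext z
  simp only [mem_compl, mem_union, mem_inter, mem_neighborFinset, compl_adj] at huv ⊢
  grind [H.adj_comm]

theorem compl_union_union_compl_neighborFinset (huv : Hᶜ.Adj u v) (huw : Hᶜ.Adj u w) :
    (Hᶜ.neighborFinset u ∪ Hᶜ.neighborFinset v ∪ Hᶜ.neighborFinset w)ᶜ =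
      H.neighborFinset u ∩ H.neighborFinset v ∩ H.neighborFinset w := by
  rw [inter_assoc, inter_inter_distrib_left, ← compl_union_compl_neighborFinset huv,
    ← compl_union_compl_neighborFinset huw, ← compl_union, ← union_union_distrib_left, union_assoc]

theorem card_compl_inter_compl (hH : IsRegularTerwilliger H a m) (huv : Hᶜ.Adj u v) :
    #(Hᶜ.neighborFinset u ∩ Hᶜ.neighborFinset v) + 2 * (a + 1) = Fintype.card W + m := by
  have hunion := card_add_card_compl (Hᶜ.neighborFinset u ∪ Hᶜ.neighborFinset v)
  rw [compl_union_compl_neighborFinset huv, hH.card_inter huv] at hunion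
  have := card_union_add_card_inter (Hᶜ.neighborFinset u) (Hᶜ.neighborFinset v)
  have := hH.card_compl_neighborFinset u
  have := hH.card_compl_neighborFinset v
  omega

theorem card_inter_inter (hH : IsRegularTerwilliger H a m) (h4 : H.IndepSetFree 4)
    (huv : Hᶜ.Adj u v) (huw : Hᶜ.Adj u w) (hvw : Hᶜ.Adj v w) :
    #(H.neighborFinset u ∩ H.neighborFinset v ∩ H.neighborFinset w) + 3 * (a + 1) =
      Fintype.card W + 3 * m := by
  have hdisj : Disjoint (Hᶜ.neighborFinset u ∩ Hᶜ.neighborFinset w)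
      (Hᶜ.neighborFinset v ∩ Hᶜ.neighborFinset w) := by
    simp only [Finset.disjoint_left, mem_inter, mem_neighborFinset]
    rintro z ⟨hu, hw⟩ ⟨hv, -⟩
    exact not_compl_adj_of_indepSetFree_four h4 huv huw hvw hu hv hw
  have hunion :=
    card_add_card_compl (Hᶜ.neighborFinset u ∪ Hᶜ.neighborFinset v ∪ Hᶜ.neighborFinset w)
  rw [compl_union_union_compl_neighborFinset huv huw] at hunion
  have hincl := card_union_add_card_inter (Hᶜ.neighborFinset u ∪ Hᶜ.neighborFinset v)
    (Hᶜ.neighborFinset w)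
  rw [union_inter_distrib_right, card_union_of_disjoint hdisj] at hincl
  have := card_union_add_card_inter (Hᶜ.neighborFinset u) (Hᶜ.neighborFinset v)
  have := hH.card_compl_inter_compl huv
  have := hH.card_compl_inter_compl huw
  have := hH.card_compl_inter_compl hvw
  have := hH.card_compl_neighborFinset u
  have := hH.card_compl_neighborFinset v
  have := hH.card_compl_neighborFinset w
  omega

theorem sum_outDegree (hH : IsRegularTerwilliger H a m) (x : W) :
    ∑ y ∈ H.neighborFinset x, outDegree H x y = #(Hᶜ.neighborFinset x) * m := by
  have habove (y : W) :
      outDegree H x y = #((Hᶜ.neighborFinset x).bipartiteAbove H.Adj y) := by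
    rw [outDegree, bipartiteAbove]
    congr 1
    grind [mem_neighborFinset]
  have hbelow (z : W) (hz : z ∈ Hᶜ.neighborFinset x) :
      #((H.neighborFinset x).bipartiteBelow H.Adj z) = m := by
    rw [← hH.card_inter ((mem_neighborFinset ..).mp hz), bipartiteBelow]
    congr 1
    grind [mem_neighborFinset, H.adj_comm]
  simp only [habove]
  rw [sum_card_bipartiteAbove_eq_sum_card_bipartiteBelow, sum_congr rfl hbelow, sum_const,
    smul_eq_mul]

theorem twinClass_eq_insert (hH : IsRegularTerwilliger H a m) (x : W) :
    twinClass H x = insert x {y ∈ H.neighborFinset x | outDegree H x y = 0} := by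
  ext y
  simp only [twinClass, mem_insert, mem_filter, mem_univ, true_and, mem_neighborFinset]
  constructor
  · intro hyx
    refine or_iff_not_imp_left.mpr fun hne ↦ ?_
    have hadj : H.Adj x y := by
      by_contra h
      have hy : y ∈ Hᶜ.neighborFinset y := by simpa [hyx] using ⟨Ne.symm hne, h⟩
      simp at hy
    exact ⟨hadj, (hH.outDegree_eq_zero_iff hadj).mpr hyx.symm⟩
  · rintro (rfl | ⟨hadj, h₀⟩)
    · rfl
    · exact ((hH.outDegree_eq_zero_iff hadj).mp h₀).symm

theorem card_twinClass_mul_add (hH : IsRegularTerwilliger H a m) {δ : ℕ} {x : W}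
    (hδ : ∀ y, H.Adj x y → outDegree H x y ≠ 0 → outDegree H x y = δ) :
    #(twinClass H x) * δ + #(Hᶜ.neighborFinset x) * m = (a + 1) * δ := by
  have hsum : #{y ∈ H.neighborFinset x | ¬ outDegree H x y = 0} * δ =
      #(Hᶜ.neighborFinset x) * m := by
    rw [← hH.sum_outDegree x, ← sum_filter_ne_zero, ← smul_eq_mul, ← sum_const]
    refine sum_congr rfl fun y hy ↦ ?_
    simp only [mem_filter, mem_neighborFinset] at hy
    exact (hδ y hy.1 hy.2).symm
  have hsplit := card_filter_add_card_filter_not (s := H.neighborFinset x)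
    (fun y ↦ outDegree H x y = 0)
  rw [card_neighborFinset_eq_degree, hH.regular x] at hsplit
  rw [hH.twinClass_eq_insert x, card_insert_of_notMem (by simp), ← hsum, ← hsplit]
  ring

theorem two_mul_outDegree_add (hH : IsRegularTerwilliger H a m) (huv : Hᶜ.Adj u v)
    {e : W} (hu : H.Adj e u) (hv : H.Adj e v) :
    2 * outDegree H e u + #(Hᶜ.neighborFinset u ∩ Hᶜ.neighborFinset v ∩ Hᶜ.neighborFinset e) =
      #(Hᶜ.neighborFinset e) := by
  have hdisj : Disjoint (H.neighborFinset u ∩ Hᶜ.neighborFinset e)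
      (H.neighborFinset v ∩ Hᶜ.neighborFinset e) := by
    simp only [Finset.disjoint_left, mem_inter, mem_neighborFinset]
    rintro z ⟨huz, hez⟩ ⟨hvz, -⟩
    exact hH.not_compl_adj_of_adj huv hu.symm hv.symm huz hvz hez
  have hdisj' : Disjoint
      (H.neighborFinset u ∩ Hᶜ.neighborFinset e ∪ H.neighborFinset v ∩ Hᶜ.neighborFinset e)
      (Hᶜ.neighborFinset u ∩ Hᶜ.neighborFinset v ∩ Hᶜ.neighborFinset e) := by
    simp only [Finset.disjoint_left, mem_union, mem_inter, mem_neighborFinset, compl_adj]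
    tauto
  have hunion : H.neighborFinset u ∩ Hᶜ.neighborFinset e ∪ H.neighborFinset v ∩
      Hᶜ.neighborFinset e ∪ Hᶜ.neighborFinset u ∩ Hᶜ.neighborFinset v ∩ Hᶜ.neighborFinset e =
      Hᶜ.neighborFinset e := by
    ext z
    simp only [mem_union, mem_inter, mem_neighborFinset, compl_adj]
    grind
  have hcard := congrArg card hunion
  rw [card_union_of_disjoint hdisj', card_union_of_disjoint hdisj, ← outDegree, ← outDegree,
    ← hH.outDegree_eq_of_compl_adj huv hu hv] at hcard
  omega

/- Counts the nonadjacent pairs `(c, e)`, where `c` is far from both `u` and `v` and `e` is adjacent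
to both, by `c` and by `e`, with the subtracted terms moved across. -/
theorem card_compl_inter_compl_mul_add (hH : IsRegularTerwilliger H a m) (huv : Hᶜ.Adj u v)
    {n δ t : ℕ} (hn : ∀ x, #(Hᶜ.neighborFinset x) = n)
    (hδ : ∀ e, H.Adj e u → H.Adj e v → outDegree H e u = δ)
    (ht : ∀ c, Hᶜ.Adj u c → Hᶜ.Adj v c →
      #(H.neighborFinset u ∩ H.neighborFinset v ∩ H.neighborFinset c) = t) :
    #(Hᶜ.neighborFinset u ∩ Hᶜ.neighborFinset v) * m + m * (2 * δ) =
      m * n + #(Hᶜ.neighborFinset u ∩ Hᶜ.neighborFinset v) * t := by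
  set F := Hᶜ.neighborFinset u ∩ Hᶜ.neighborFinset v with hF
  set C := H.neighborFinset u ∩ H.neighborFinset v with hC
  have hCm : #C = m := hH.card_inter huv
  have hbelow (c) (hc : c ∈ C) : #(F.bipartiteBelow Hᶜ.Adj c) + 2 * δ = n := by
    simp only [hC, mem_inter, mem_neighborFinset] at hc
    rw [← hn c, ← hH.two_mul_outDegree_add huv hc.1.symm hc.2.symm, hδ c hc.1.symm hc.2.symm,
      add_comm]
    congr 2
    grind [bipartiteBelow, mem_neighborFinset, Hᶜ.adj_comm]
  have habove (c) (hc : c ∈ F) : #(C.bipartiteAbove Hᶜ.Adj c) + t = m := by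
    simp only [hF, mem_inter, mem_neighborFinset] at hc
    rw [← hCm, ← ht c hc.1 hc.2,
      ← card_filter_add_card_filter_not (s := C) (Hᶜ.Adj c ·), bipartiteAbove]
    congr 2
    ext e
    simp only [hC, mem_filter, mem_inter, mem_neighborFinset, compl_adj] at hc ⊢
    grind
  have hsum := sum_card_bipartiteAbove_eq_sum_card_bipartiteBelow (s := F) (t := C) Hᶜ.Adj
  calc #F * m + m * (2 * δ) = ∑ c ∈ F, (#(C.bipartiteAbove Hᶜ.Adj c) + t) + m * (2 * δ) := by
        rw [sum_congr rfl habove, sum_const, smul_eq_mul]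
    _ = ∑ e ∈ C, (#(F.bipartiteBelow Hᶜ.Adj e) + 2 * δ) + #F * t := by
        simp only [sum_add_distrib, hsum, sum_const, smul_eq_mul, hCm]
        ring
    _ = m * n + #F * t := by
        rw [sum_congr rfl hbelow, sum_const, smul_eq_mul, hCm]

theorem three_mul_outDegree (hH : IsRegularTerwilliger H a m) (h4 : H.IndepSetFree 4)
    (huv : Hᶜ.Adj u v) (huw : Hᶜ.Adj u w) (hvw : Hᶜ.Adj v w) {e : W} (hu : H.Adj e u)
    (hv : H.Adj e v) (hw : H.Adj e w) : 3 * outDegree H e u = #(Hᶜ.neighborFinset e) := by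
  have hfar : Hᶜ.neighborFinset u ∩ Hᶜ.neighborFinset v ∩ Hᶜ.neighborFinset e =
      H.neighborFinset w ∩ Hᶜ.neighborFinset e := by
    ext z
    simp only [mem_inter, mem_neighborFinset]
    refine ⟨fun ⟨⟨huz, hvz⟩, hez⟩ ↦ ⟨?_, hez⟩, fun ⟨hwz, hez⟩ ↦ ⟨⟨?_, ?_⟩, hez⟩⟩
    · by_contra hwz
      exact not_compl_adj_of_indepSetFree_four h4 huv huw hvw huz hvz ⟨fun h ↦ hez.2 (h ▸ hw), hwz⟩
    · exact ⟨fun h ↦ hez.2 (h ▸ hu), fun huz ↦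
        hH.not_compl_adj_of_adj huw hu.symm hw.symm huz hwz hez⟩
    · exact ⟨fun h ↦ hez.2 (h ▸ hv), fun hvz ↦
        hH.not_compl_adj_of_adj hvw hv.symm hw.symm hvz hwz hez⟩
  have hsum := hH.two_mul_outDegree_add huv hu hv
  have heq := hH.outDegree_eq_of_compl_adj huw hu hw
  rw [hfar, ← outDegree] at hsum
  omega

end Counting

section TwinClass

variable {u v w : W} {s : ℕ}

theorem mem_compl_neighborFinset_of_twin {x y z : W}
    (h : Hᶜ.neighborFinset y = Hᶜ.neighborFinset x) :
    y ∈ Hᶜ.neighborFinset z ↔ x ∈ Hᶜ.neighborFinset z := by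
  rw [mem_neighborFinset, Hᶜ.adj_comm, ← mem_neighborFinset, h, mem_neighborFinset, Hᶜ.adj_comm,
    ← mem_neighborFinset]

theorem dvd_card_compl_inter_compl (hs : ∀ x, #(twinClass H x) = s) (u v : W) :
    s ∣ #(Hᶜ.neighborFinset u ∩ Hᶜ.neighborFinset v) :=
  dvd_card_of_card_fiber_eq hs fun x hx y hyx ↦ by
    simpa only [mem_inter, mem_compl_neighborFinset_of_twin hyx] using hx

theorem dvd_of_compl_adj (hH : IsRegularTerwilliger H a m) (hs : ∀ x, #(twinClass H x) = s)
    (huv : Hᶜ.Adj u v) : s ∣ m := by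
  rw [← hH.card_inter huv, ← compl_union_compl_neighborFinset huv]
  refine dvd_card_of_card_fiber_eq hs fun x hx y hyx ↦ ?_
  simpa only [mem_compl, mem_union, mem_compl_neighborFinset_of_twin hyx] using hx

theorem dvd_card_inter_inter (hs : ∀ x, #(twinClass H x) = s) (huv : Hᶜ.Adj u v)
    (huw : Hᶜ.Adj u w) :
    s ∣ #(H.neighborFinset u ∩ H.neighborFinset v ∩ H.neighborFinset w) := by
  rw [← compl_union_union_compl_neighborFinset huv huw]
  refine dvd_card_of_card_fiber_eq hs fun x hx y hyx ↦ ?_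
  simpa only [mem_compl, mem_union, mem_compl_neighborFinset_of_twin hyx] using hx

end TwinClass

section IndepSet

variable {N n r s t δ : ℕ}

theorem eq_zero_of_card_identities (hδ : δ ≠ 0) (hn : n + (a + 1) = N)
    (hr : r + 2 * (a + 1) = N + m) (ht : t + 3 * (a + 1) = N + 3 * m)
    (htwin : s * δ + n * m = (a + 1) * δ) (hpairs : r * m + m * (2 * δ) = m * n + r * t)
    (hst : s ∣ t) (hδn : t ≠ 0 → 3 * δ = n) : t = 0 := by
  by_contra ht₀
  obtain rfl := hδn ht₀
  have ha : a + 1 = s + 3 * m := by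
    refine Nat.eq_of_mul_eq_mul_right (Nat.pos_of_ne_zero hδ) ?_
    rw [← htwin]
    ring
  have hδ' : 3 * δ = t + 2 * s + 3 * m := by omega
  obtain rfl : r = t + s + m := by omega
  have hle : s ≤ t := Nat.le_of_dvd (Nat.pos_of_ne_zero ht₀) hst
  have hpairs' : t * m + 3 * t * t + 3 * s * t = s * m := by
    zify at hpairs hδ' ⊢
    linear_combination -3 * hpairs - (m : ℤ) * hδ'
  have := Nat.mul_le_mul_right m hle
  have : 0 < 3 * t * t := by positivity
  omega

theorem card_identities_absurd (hm : m ≠ 0) (hs : s ≠ 0) (hn : n + (a + 1) = N)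
    (hr : r + 2 * (a + 1) = N + m) (ht : 3 * (a + 1) = N + 3 * m)
    (htwin : s * δ + n * m = (a + 1) * δ) (hpairs : r * m + m * (2 * δ) = m * n)
    (hsr : s ∣ r) (hsm : s ∣ m) : False := by
  have ha : a + 1 = r + 2 * m := by omega
  obtain rfl : n = 2 * r + m := by omega
  have hδ : 2 * δ = r + m := by
    have : r + 2 * δ = 2 * r + m := by
      refine Nat.eq_of_mul_eq_mul_left (Nat.pos_of_ne_zero hm) ?_
      rw [← hpairs]
      ring
    omega
  have hrm : r * r = s * (r + m) + r * m := by
    rw [ha] at htwin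
    zify at htwin hδ ⊢
    linear_combination (s - r - 2 * m : ℤ) * hδ - 2 * htwin
  obtain ⟨ρ, rfl⟩ := hsr
  obtain ⟨μ, rfl⟩ := hsm
  have hρμ : ρ * ρ = ρ + μ * (ρ + 1) := by
    refine Nat.eq_of_mul_eq_mul_left (Nat.pos_of_ne_zero (mul_ne_zero hs hs)) ?_
    linear_combination hrm
  -- Modulo `ρ + 1` the identity reads `1 = -1`.
  have hdvd : ρ + 1 ∣ 2 := by
    zify at hρμ ⊢
    exact ⟨μ + 2 - ρ, by linear_combination hρμ⟩
  have hμ : μ ≠ 0 := right_ne_zero_of_mul hm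
  have : ρ ≤ 1 := by have := Nat.le_of_dvd two_pos hdvd; omega
  interval_cases ρ <;> omega

theorem indepSetFree_three (hH : IsRegularTerwilliger H a m) (hm : m ≠ 0)
    (h4 : H.IndepSetFree 4) : H.IndepSetFree 3 := by
  rw [← cliqueFree_compl]
  intro S hS
  obtain ⟨u, v, w, huv, huw, hvw, rfl⟩ := is3Clique_iff.mp hS
  obtain ⟨δ, hδ₀, hδ⟩ := hH.exists_outDegree_eq hm huv
  have hδ_far {e x y : W} (hxy : Hᶜ.Adj x y) (hx : H.Adj e x) (hy : H.Adj e y) :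
      outDegree H e x = δ :=
    hδ e x hx (hH.outDegree_comm hx ▸ outDegree_ne_zero_of_compl_adj hxy hy.symm)
  have hn (x : W) := hH.card_compl_neighborFinset x
  have hn_eq (x : W) : #(Hᶜ.neighborFinset x) = #(Hᶜ.neighborFinset u) :=
    Nat.add_right_cancel ((hn x).trans (hn u).symm)
  have ht := hH.card_inter_inter h4 huv huw hvw
  have htwin (x : W) := hH.card_twinClass_mul_add (hδ x)
  have hs (x : W) : #(twinClass H x) = #(twinClass H u) := by
    refine Nat.eq_of_mul_eq_mul_right (Nat.pos_of_ne_zero hδ₀) (Nat.add_right_cancel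
      (m := #(Hᶜ.neighborFinset u) * m) ?_)
    rw [htwin u, ← htwin x, hn_eq x]
  have hs₀ : #(twinClass H u) ≠ 0 := card_ne_zero_of_mem (a := u) (by simp [twinClass])
  have hpairs := hH.card_compl_inter_compl_mul_add huv hn_eq
    (fun _ hu hv ↦ hδ_far huv hu hv) fun _ hu hv ↦
      Nat.add_right_cancel ((hH.card_inter_inter h4 huv hu hv).trans ht.symm)
  have hδn : #(H.neighborFinset u ∩ H.neighborFinset v ∩ H.neighborFinset w) ≠ 0 →
      3 * δ = #(Hᶜ.neighborFinset u) := by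
    rw [card_ne_zero]
    rintro ⟨e, he⟩
    simp only [mem_inter, mem_neighborFinset, H.adj_comm _ e] at he
    rw [← hn_eq e, ← hH.three_mul_outDegree h4 huv huw hvw he.1.1 he.1.2 he.2,
      hδ_far huv he.1.1 he.1.2]
  have ht₀ := eq_zero_of_card_identities hδ₀ (hn u) (hH.card_compl_inter_compl huv) ht
    (htwin u) hpairs (dvd_card_inter_inter hs huv huw) hδn
  rw [ht₀, zero_add] at ht
  rw [ht₀, mul_zero, add_zero] at hpairs
  exact card_identities_absurd hm hs₀ (hn u) (hH.card_compl_inter_compl huv) ht (htwin u) hpairs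
    (dvd_card_compl_inter_compl hs u v) (hH.dvd_of_compl_adj hs huv)

theorem mul_le_card_of_isNIndepSet (hH : IsRegularTerwilliger H a 0) {S : Finset W}
    (hS : H.IsNIndepSet t S) : t * (a + 1) ≤ Fintype.card W := by
  have hdisj : (S : Set W).PairwiseDisjoint fun x ↦ insert x (H.neighborFinset x) := by
    intro x hx y hy hxy
    have hadj := hS.isIndepSet hx hy hxy
    have hinter := card_eq_zero.mp (hH.card_inter ⟨hxy, hadj⟩)
    rw [← Finset.disjoint_iff_inter_eq_empty] at hinter
    rw [Function.onFun, disjoint_insert_left, disjoint_insert_right, mem_insert,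
      mem_neighborFinset, mem_neighborFinset, H.adj_comm y x]
    exact ⟨by tauto, hadj, hinter⟩
  calc t * (a + 1) = ∑ x ∈ S, #(insert x (H.neighborFinset x)) := by
        simp [hS.card_eq, hH.regular.degree_eq]
    _ = #(S.biUnion fun x ↦ insert x (H.neighborFinset x)) := (card_biUnion hdisj).symm
    _ ≤ Fintype.card W := card_le_univ _

end IndepSet

end IsRegularTerwilliger

section Claw

variable {V : Type*} {G : SimpleGraph V} {t : ℕ}

theorem hasClaw_iff_exists_not_indepSetFree :
    HasClaw G t ↔ ∃ x, ¬ (G.induce (G.neighborSet x)).IndepSetFree t := by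
  classical
  simp only [HasClaw, IndepSetFree, not_forall, not_not]
  refine exists_congr fun x ↦ ⟨fun ⟨s, hs, hadj, hpair⟩ ↦ ?_, fun ⟨S, hS⟩ ↦ ?_⟩
  · refine ⟨s.subtype (· ∈ G.neighborSet x), fun y hy z hz hyz ↦ ?_, ?_⟩
    · rw [mem_coe, mem_subtype] at hy hz
      exact hpair hy hz (Subtype.coe_ne_coe.mpr hyz)
    · exact (card_subtype ..).trans ((congrArg card (filter_true_of_mem hadj)).trans hs)
  · refine ⟨S.map (Function.Embedding.subtype _), by rw [card_map, hS.card_eq], ?_, ?_⟩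
    · simp only [mem_map, Function.Embedding.subtype_apply]
      rintro _ ⟨y, -, rfl⟩
      exact y.2
    · simp only [coe_map, Function.Embedding.subtype_apply]
      rintro _ ⟨y, hy, rfl⟩ _ ⟨z, hz, rfl⟩ hyz
      exact hS.isIndepSet hy hz (Subtype.coe_ne_coe.mp hyz)

theorem compl_induce_adj {s : Set V} {p q : s} : (G.induce s)ᶜ.Adj p q ↔ Gᶜ.Adj p q := by
  simp [Subtype.ext_iff]

theorem dist_eq_two_of_compl_adj {x u v : V} (huv : Gᶜ.Adj u v) (hu : G.Adj x u)
    (hv : G.Adj x v) : G.dist u v = 2 := by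
  rw [SimpleGraph.dist, edist_eq_two_iff.mpr ⟨huv.1, huv.2, x, hu.symm, hv.symm⟩]
  rfl

theorem exists_dist_eq_of_le (hG : G.Connected) {x y : V} {i : ℕ} (hi : i ≤ G.dist x y) :
    ∃ z, G.dist x z = i := by
  obtain ⟨p, hp⟩ := hG.exists_walk_length_eq_dist x y
  refine ⟨_, (length_eq_dist_of_subwalk hp (p.isSubwalk_take i)).symm.trans ?_⟩
  rw [Walk.take_length, hp, min_eq_left hi]

end Claw

namespace IsDRG

section Parameters

variable {V : Type*} [Fintype V] {G : SimpleGraph V} {D i : ℕ} {b c : ℕ → ℕ} {x y : V}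

theorem connected (h : IsDRG G D b c) : G.Connected := h.1

theorem dist_le (h : IsDRG G D b c) (x y : V) : G.dist x y ≤ D := h.2.2.1 x y

theorem c_one (h : IsDRG G D b c) : c 1 = 1 := h.2.2.2.2.1

theorem b_diameter (h : IsDRG G D b c) : b D = 0 := h.2.2.2.2.2.1

variable [DecidableRel G.Adj]

theorem card_filter_dist_eq_pred (h : IsDRG G D b c) (hxy : G.dist x y = i + 1) :
    #{z ∈ G.neighborFinset y | G.dist x z = i} = c (i + 1) := by
  rw [← (h.2.2.2.2.2.2 _ (hxy ▸ h.dist_le x y) x y hxy).1, ← Set.ncard_coe_finset]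
  simp

theorem card_filter_dist_eq_succ (h : IsDRG G D b c) (hxy : G.dist x y = i) :
    #{z ∈ G.neighborFinset y | G.dist x z = i + 1} = b i := by
  rw [← (h.2.2.2.2.2.2 _ (hxy ▸ h.dist_le x y) x y hxy).2, ← Set.ncard_coe_finset]
  simp

theorem isRegularOfDegree (h : IsDRG G D b c) : G.IsRegularOfDegree (b 0) := fun y ↦ by
  rw [← h.card_filter_dist_eq_succ (dist_self (v := y)), ← card_neighborFinset_eq_degree]
  congr 1
  ext z
  simp [dist_eq_one_iff_adj]

theorem c_add_card_filter_dist_add_b (h : IsDRG G D b c) (hxy : G.dist x y = i + 1) :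
    c (i + 1) + #{z ∈ G.neighborFinset y | G.dist x z = i + 1} + b (i + 1) = b 0 := by
  classical
  rw [← h.card_filter_dist_eq_pred hxy, ← h.card_filter_dist_eq_succ hxy,
    ← h.isRegularOfDegree y, ← card_neighborFinset_eq_degree, ← card_union_of_disjoint,
    ← card_union_of_disjoint, ← filter_or, ← filter_or, filter_true_of_mem]
  · intro z hz
    have := ((mem_neighborFinset ..).mp hz).diff_dist_adj (u := x)
    omega
  all_goals
    simp only [Finset.disjoint_left, mem_union, mem_filter]
    omega

end Parameters

section ClawFree

variable {V : Type*} [Fintype V] {G : SimpleGraph V} {D i : ℕ} {b c : ℕ → ℕ}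

theorem c_le (h : IsDRG G D b c) (hi : i < D) : c (i + 1) ≤ b 0 := by
  classical
  obtain ⟨x, y, hxy⟩ := h.2.1
  obtain ⟨z, hz⟩ := exists_dist_eq_of_le h.connected (x := x) (y := y) (i := i + 1) (by omega)
  have := h.c_add_card_filter_dist_add_b hz
  omega

theorem b_one_pos (h : IsDRG G D b c) {t : ℕ} (ht : 2 ≤ t) (hclaw : HasClaw G t) : 0 < b 1 := by
  classical
  obtain ⟨x, s, hs, hadj, hpair⟩ := hclaw
  obtain ⟨u, hu, v, hv, huv⟩ := one_lt_card.mp (hs ▸ ht)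
  rw [← h.card_filter_dist_eq_succ (dist_eq_one_iff_adj.mpr (hadj u hu).symm)]
  refine card_pos.mpr ⟨v, mem_filter.mpr ⟨(mem_neighborFinset ..).mpr (hadj v hv), ?_⟩⟩
  exact dist_eq_two_of_compl_adj ⟨huv, hpair hu hv huv⟩ (hadj u hu) (hadj v hv)

/- Otherwise a neighbour of `v` further from `u` would be adjacent to all the other ones, giving
`b i ≤ 1 + a (i + 1)`. -/
theorem exists_compl_adj_of_lt (h : IsDRG G D b c) (hi : i < D) (hbc : b 0 + 2 ≤ b i + c (i + 1))
    {u v : V} (huv : G.dist u v = i) :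
    ∃ w w', G.Adj v w ∧ G.Adj v w' ∧
      G.dist u w = i + 1 ∧ G.dist u w' = i + 1 ∧ Gᶜ.Adj w w' := by
  classical
  have hcard := h.card_filter_dist_eq_succ huv
  have := h.c_le hi
  obtain ⟨w, hw⟩ : {z ∈ G.neighborFinset v | G.dist u z = i + 1}.Nonempty := by
    rw [← card_pos]
    omega
  by_contra! hadj
  rw [mem_filter, mem_neighborFinset] at hw
  have hsub : {z ∈ G.neighborFinset v | G.dist u z = i + 1} ⊆
      insert w {z ∈ G.neighborFinset w | G.dist u z = i + 1} := by
    intro z hz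
    rw [mem_filter, mem_neighborFinset] at hz
    have := hadj w z hw.1 hz.1 hw.2 hz.2
    simp only [mem_insert, mem_filter, mem_neighborFinset, compl_adj] at this ⊢
    grind
  have := (card_le_card hsub).trans (card_insert_le ..)
  have := h.c_add_card_filter_dist_add_b hw.2
  omega

theorem isClique_setOf_dist_lt (h : IsDRG G D b c) (h4 : ¬ HasClaw G 4) (hi : i < D)
    (hbc : b 0 + 2 ≤ b i + c (i + 1)) {u v : V} (huv : G.dist u v = i) :
    G.IsClique {z | G.Adj v z ∧ G.dist u z < i} := by
  obtain ⟨w, w', hvw, hvw', hw, hw', hww'⟩ := h.exists_compl_adj_of_lt hi hbc huv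
  rintro y ⟨hvy, hy⟩ z ⟨hvz, hz⟩ hyz
  have far {p q : V} (hp : G.dist u p < i) (hq : G.dist u q = i + 1) : Gᶜ.Adj p q := by
    refine ⟨by rintro rfl; omega, fun hpq ↦ ?_⟩
    have := hpq.diff_dist_adj (u := u)
    omega
  simp only [hasClaw_iff_exists_not_indepSetFree, not_exists, not_not] at h4
  by_contra hadj
  have compl {p q : V} (hp : G.Adj v p) (hq : G.Adj v q) (hpq : Gᶜ.Adj p q) :
      (G.induce (G.neighborSet v))ᶜ.Adj ⟨p, hp⟩ ⟨q, hq⟩ := compl_induce_adj.mpr hpq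
  exact not_compl_adj_of_indepSetFree_four (h4 v) (compl hvw hvw' hww')
    (compl hvw hvy (far hy hw).symm) (compl hvw' hvy (far hy hw').symm)
    (compl hvw hvz (far hz hw).symm) (compl hvw' hvz (far hz hw').symm)
    (compl hvy hvz ⟨hyz, hadj⟩)

end ClawFree

section LocalGraph

variable {V : Type*} [Fintype V] {G : SimpleGraph V} [DecidableRel G.Adj] {D : ℕ} {b c : ℕ → ℕ}

theorem isRegularOfDegree_induce_neighborSet (h : IsDRG G D b c) (x : V) :
    (G.induce (G.neighborSet x)).IsRegularOfDegree (b 0 - b 1 - c 1) := fun y ↦ by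
  classical
  have hcard := h.c_add_card_filter_dist_add_b (dist_eq_one_iff_adj.mpr y.2)
  rw [← card_neighborFinset_eq_degree, ← card_map (.subtype _), map_neighborFinset_induce]
  have hset : G.neighborFinset y ∩ (G.neighborSet x).toFinset =
      {z ∈ G.neighborFinset y | G.dist x z = 0 + 1} := by
    ext z
    simp
  rw [zero_add] at hset hcard
  rw [hset]
  omega

variable [DecidableEq V]

theorem card_inter_induce_neighborSet (h : IsDRG G D b c) {x : V} {u v : G.neighborSet x}
    (huv : G.dist u v = 2) (hclique : G.IsClique (G.commonNeighbors u v)) :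
    #((G.induce (G.neighborSet x)).neighborFinset u ∩
      (G.induce (G.neighborSet x)).neighborFinset v) = c 2 - 1 := by
  have hx : x ∈ G.commonNeighbors u v := ⟨u.2.symm, v.2.symm⟩
  have hset : G.neighborFinset u ∩ (G.neighborSet x).toFinset ∩
      (G.neighborFinset v ∩ (G.neighborSet x).toFinset) =
      {z ∈ G.neighborFinset v | G.dist u z = 1}.erase x := by
    ext z
    simp only [mem_inter, mem_neighborFinset, Set.mem_toFinset, mem_neighborSet, mem_erase,
      mem_filter, dist_eq_one_iff_adj]
    exact ⟨fun hz ↦ ⟨hz.1.2.ne', hz.2.1, hz.1.1⟩, fun hz ↦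
      have hxz := hclique hx ⟨hz.2.2, hz.2.1⟩ hz.1.symm
      ⟨⟨hz.2.2, hxz⟩, hz.2.1, hxz⟩⟩
  rw [← card_map (.subtype _), map_inter, map_neighborFinset_induce, map_neighborFinset_induce,
    hset, card_erase_of_mem, h.card_filter_dist_eq_pred huv]
  simpa only [mem_filter, mem_neighborFinset, dist_eq_one_iff_adj]
    using (And.symm hx : G.Adj v x ∧ G.Adj u x)

theorem isRegularTerwilliger_induce_neighborSet (h : IsDRG G D b c)
    (hclique : ∀ {u v}, G.dist u v = 2 → G.IsClique (G.commonNeighbors u v)) (x : V) :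
    IsRegularTerwilliger (G.induce (G.neighborSet x)) (b 0 - b 1 - c 1) (c 2 - 1) where
  regular := h.isRegularOfDegree_induce_neighborSet x
  card_inter {u v} huv :=
    have hdist := dist_eq_two_of_compl_adj (compl_induce_adj.mp huv) u.2 v.2
    h.card_inter_induce_neighborSet hdist (hclique hdist)
  isClique {u v} huv _ hp _ hq hpq :=
    hclique (dist_eq_two_of_compl_adj (compl_induce_adj.mp huv) u.2 v.2) hp hq
      (Subtype.coe_ne_coe.mpr hpq)

end LocalGraph

theorem b_two_add_c_three_le {V : Type*} [Fintype V] {G : SimpleGraph V} {D : ℕ} {b c : ℕ → ℕ}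
    (h : IsDRG G D b c) (hD : 2 < D)
    (hk : (b 0 : ℤ) < 3 * (((b 0 : ℤ) - b 1 - c 1) + 1)) (h3 : HasClaw G 3)
    (h4 : ¬ HasClaw G 4) : b 2 + c 3 ≤ b 0 + 1 := by
  classical
  by_contra! hlt
  have hclique {u v : V} (huv : G.dist u v = 2) : G.IsClique (G.commonNeighbors u v) := by
    have hsub : G.commonNeighbors u v ⊆ {z | G.Adj v z ∧ G.dist u z < 2} := fun z hz ↦
      ⟨hz.2, (dist_eq_one_iff_adj.mpr hz.1).trans_lt one_lt_two⟩
    exact (h.isClique_setOf_dist_lt h4 hD hlt huv).subset hsub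
  obtain ⟨x, hx⟩ := hasClaw_iff_exists_not_indepSetFree.mp h3
  have hT := h.isRegularTerwilliger_induce_neighborSet hclique x
  rw [hasClaw_iff_exists_not_indepSetFree, not_exists] at h4
  by_cases hm : c 2 - 1 = 0
  · rw [hm] at hT
    rw [IndepSetFree] at hx
    push Not at hx
    obtain ⟨S, hS⟩ := hx
    have hcard := hT.mul_le_card_of_isNIndepSet hS
    rw [card_neighborSet_eq_degree, h.isRegularOfDegree x] at hcard
    omega
  · exact hx (hT.indepSetFree_three hm (not_not.mp (h4 x)))

end IsDRG

section Cubic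

theorem le_middle_root_of_cubic_signs {θ₁ θ₂ θ₃ x y : ℝ} (h₃₂ : θ₃ < θ₂)
    (hyx : y < x) (hy : 0 ≤ (y - θ₁) * (y - θ₂) * (y - θ₃))
    (hx : (x - θ₁) * (x - θ₂) * (x - θ₃) ≤ 0) : y ≤ θ₂ := by
  by_contra! hlt
  have h₁ : θ₁ ≤ y := by
    have hpos : 0 < (y - θ₂) * (y - θ₃) := mul_pos (by linarith) (by linarith)
    rw [mul_assoc] at hy
    linarith [nonneg_of_mul_nonneg_left hy hpos]
  have : 0 < (x - θ₁) * (x - θ₂) * (x - θ₃) :=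
    mul_pos (mul_pos (by linarith) (by linarith)) (by linarith)
  linarith

theorem monic_cubic_eq_prod {R : Type*} [CommRing R] [IsDomain R] {p q r θ₁ θ₂ θ₃ : R}
    (h₁₂ : θ₁ ≠ θ₂) (h₁₃ : θ₁ ≠ θ₃) (h₂₃ : θ₂ ≠ θ₃)
    (h₁ : θ₁ ^ 3 + p * θ₁ ^ 2 + q * θ₁ + r = 0) (h₂ : θ₂ ^ 3 + p * θ₂ ^ 2 + q * θ₂ + r = 0)
    (h₃ : θ₃ ^ 3 + p * θ₃ ^ 2 + q * θ₃ + r = 0) (x : R) :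
    x ^ 3 + p * x ^ 2 + q * x + r = (x - θ₁) * (x - θ₂) * (x - θ₃) := by
  have dd₁₂ : θ₁ ^ 2 + θ₁ * θ₂ + θ₂ ^ 2 + p * (θ₁ + θ₂) + q = 0 := by
    refine mul_left_cancel₀ (sub_ne_zero.mpr h₁₂) ?_
    linear_combination h₁ - h₂
  have dd₁₃ : θ₁ ^ 2 + θ₁ * θ₃ + θ₃ ^ 2 + p * (θ₁ + θ₃) + q = 0 := by
    refine mul_left_cancel₀ (sub_ne_zero.mpr h₁₃) ?_
    linear_combination h₁ - h₃
  have dd₁₂₃ : θ₁ + θ₂ + θ₃ + p = 0 := by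
    refine mul_left_cancel₀ (sub_ne_zero.mpr h₂₃) ?_
    linear_combination dd₁₂ - dd₁₃
  linear_combination h₁ + (x - θ₁) * dd₁₂ + (x - θ₁) * (x - θ₂) * dd₁₂₃

/-- The characteristic polynomial of the intersection matrix of a distance-regular graph of
diameter 3 with intersection array `{k, b₁, b₂; 1, c₂, c₃}`, divided by its factor `x - k`. -/
def quotientCubic (k b₁ b₂ c₂ c₃ x : ℝ) : ℝ :=
  (x - (k - c₃)) * (c₂ * (1 + x) + (x ^ 2 - (k - b₁ - 1) * x - k)) +
    b₂ * (x ^ 2 - (k - b₁ - 1) * x - k)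

variable {k b₁ b₂ c₂ c₃ : ℝ}

theorem quotientCubic_neg_one : quotientCubic k b₁ b₂ c₂ c₃ (-1) = b₁ * (k - c₃ + 1 - b₂) := by
  rw [quotientCubic]
  ring

/- At a zero of the factor `c₂ * (1 + x) + (x ^ 2 - (k - b₁ - 1) * x - k)` the cubic equals
`-b₂ * c₂ * (1 + x)`. -/
theorem exists_quotientCubic_nonpos (hk : 0 ≤ k) (hb₁ : 0 < b₁) (hb₂ : 0 ≤ b₂) (hc₂ : 0 ≤ c₂) :
    ∃ x, -1 < x ∧ quotientCubic k b₁ b₂ c₂ c₃ x ≤ 0 := by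
  let g (x : ℝ) := c₂ * (1 + x) + (x ^ 2 - (k - b₁ - 1) * x - k)
  have hneg : g (-1) < 0 := by
    simp only [g]
    linarith
  have hpos : 0 ≤ g k := by
    have : g k = c₂ * (1 + k) + b₁ * k := by simp only [g]; ring
    rw [this]
    positivity
  obtain ⟨x, hx, hgx⟩ := intermediate_value_Ioc (f := g) (by linarith) (by fun_prop) ⟨hneg, hpos⟩
  refine ⟨x, hx.1, ?_⟩
  have hval : quotientCubic k b₁ b₂ c₂ c₃ x = -(b₂ * c₂ * (1 + x)) := by
    simp only [g] at hgx
    rw [quotientCubic]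
    linear_combination (x - (k - c₃) + b₂) * hgx
  have : 0 ≤ 1 + x := by linarith [hx.1]
  rw [hval, neg_nonpos]
  positivity

theorem quotientCubic_eq_prod {θ₁ θ₂ θ₃ : ℝ} (h₃₂ : θ₃ < θ₂) (h₂₁ : θ₂ < θ₁)
    (h₁ : quotientCubic k b₁ b₂ c₂ c₃ θ₁ = 0) (h₂ : quotientCubic k b₁ b₂ c₂ c₃ θ₂ = 0)
    (h₃ : quotientCubic k b₁ b₂ c₂ c₃ θ₃ = 0) (x : ℝ) :
    quotientCubic k b₁ b₂ c₂ c₃ x = (x - θ₁) * (x - θ₂) * (x - θ₃) := by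
  have hexpand (y : ℝ) : quotientCubic k b₁ b₂ c₂ c₃ y =
      y ^ 3 + (c₂ - (k - b₁ - 1) + b₂ - (k - c₃)) * y ^ 2 +
        (c₂ - k - (k - c₃) * (c₂ - (k - b₁ - 1)) - b₂ * (k - b₁ - 1)) * y +
        (-(k - c₃) * (c₂ - k) - b₂ * k) := by
    rw [quotientCubic]
    ring
  rw [hexpand] at *
  exact monic_cubic_eq_prod h₂₁.ne' (h₃₂.trans h₂₁).ne' h₃₂.ne' h₁ h₂ h₃ x

end Cubic

section LayerSum

variable {V : Type*} [Fintype V] {G : SimpleGraph V} {v : V → ℝ} {θ : ℝ}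

/-- The sum of the entries of `v` over the vertices at distance `i` from `x`. -/
noncomputable def layerSum (G : SimpleGraph V) (v : V → ℝ) (x : V) (i : ℕ) : ℝ :=
  ∑ z with G.dist x z = i, v z

theorem layerSum_zero (hG : G.Connected) (x : V) : layerSum G v x 0 = v x := by
  classical
  simp [layerSum, hG.dist_eq_zero_iff, sum_filter]

variable [DecidableRel G.Adj]

theorem mul_layerSum (hv : (G.adjMatrix ℝ).mulVec v = θ • v) (x : V) (i : ℕ) :
    θ * layerSum G v x i = ∑ y, (#{z ∈ G.neighborFinset y | G.dist x z = i} : ℝ) * v y := by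
  have heigen (z : V) : θ * v z = ∑ y ∈ G.neighborFinset z, v y := by
    rw [← adjMatrix_mulVec_apply, hv, Pi.smul_apply, smul_eq_mul]
  simp only [layerSum, mul_sum, heigen, ← nsmul_eq_mul, ← sum_const]
  refine sum_comm' fun z y ↦ ?_
  simp [G.adj_comm, and_comm]

end LayerSum

namespace IsDRG

section Eigenvalues

variable {V : Type*} [Fintype V] {G : SimpleGraph V} {D : ℕ} {b c : ℕ → ℕ} {v : V → ℝ} {θ : ℝ}

theorem layerSum_eq_zero (h : IsDRG G D b c) (x : V) {i : ℕ} (hi : D < i) :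
    layerSum G v x i = 0 := by
  rw [layerSum, filter_false_of_mem, sum_empty]
  exact fun z _ ↦ ((h.dist_le x z).trans_lt hi).ne

variable [DecidableRel G.Adj]

theorem mul_layerSum_zero (h : IsDRG G D b c) (hv : (G.adjMatrix ℝ).mulVec v = θ • v) (x : V) :
    θ * layerSum G v x 0 = layerSum G v x 1 := by
  have hcard (y : V) : (#{z ∈ G.neighborFinset y | G.dist x z = 0} : ℝ) * v y =
      if G.dist x y = 1 then v y else 0 := by
    split_ifs with hy
    · rw [h.card_filter_dist_eq_pred hy, zero_add, h.c_one, Nat.cast_one, one_mul]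
    · rw [filter_false_of_mem, card_empty, Nat.cast_zero, zero_mul]
      intro z hz hxz
      obtain rfl := h.connected.dist_eq_zero_iff.mp hxz
      exact hy (dist_eq_one_iff_adj.mpr ((mem_neighborFinset ..).mp hz).symm)
  rw [mul_layerSum hv, sum_congr rfl fun y _ ↦ hcard y, layerSum, sum_filter]

theorem mul_layerSum_succ (h : IsDRG G D b c) (hv : (G.adjMatrix ℝ).mulVec v = θ • v) (x : V)
    (i : ℕ) : θ * layerSum G v x (i + 1) = b i * layerSum G v x i +
      (b 0 - b (i + 1) - c (i + 1)) * layerSum G v x (i + 1) +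
        c (i + 2) * layerSum G v x (i + 2) := by
  have hcard (y : V) : (#{z ∈ G.neighborFinset y | G.dist x z = i + 1} : ℝ) * v y =
      (if G.dist x y = i then b i * v y else 0) +
        (if G.dist x y = i + 1 then (b 0 - b (i + 1) - c (i + 1)) * v y else 0) +
        (if G.dist x y = i + 2 then c (i + 2) * v y else 0) := by
    by_cases hpred : G.dist x y = i
    · simp [h.card_filter_dist_eq_succ hpred, hpred]
    by_cases heq : G.dist x y = i + 1
    · simp [← h.c_add_card_filter_dist_add_b heq, heq]
    by_cases hsucc : G.dist x y = i + 2
    · simp [h.card_filter_dist_eq_pred hsucc, hsucc]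
    · rw [if_neg hpred, if_neg heq, if_neg hsucc, filter_false_of_mem]
      · simp
      intro z hz
      have := ((mem_neighborFinset ..).mp hz).diff_dist_adj (u := x)
      omega
  rw [mul_layerSum hv, sum_congr rfl fun y _ ↦ hcard y]
  simp only [layerSum, sum_add_distrib, ← sum_filter, ← mul_sum]

theorem quotientCubic_eq_zero (h : IsDRG G 3 b c) (hθ : IsAdjEigenvalue G θ) (hk : θ ≠ b 0) :
    quotientCubic (b 0) (b 1) (b 2) (c 2) (c 3) θ = 0 := by
  obtain ⟨v, hv₀, hv⟩ := hθ
  obtain ⟨x, hx⟩ := Function.ne_iff.mp hv₀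
  have hzero := h.mul_layerSum_zero hv x
  have hone := h.mul_layerSum_succ hv x 0
  have htwo := h.mul_layerSum_succ hv x 1
  have hthree := h.mul_layerSum_succ hv x 2
  simp only [zero_add, Nat.reduceAdd, h.c_one, h.b_diameter, Nat.cast_one, Nat.cast_zero,
    h.layerSum_eq_zero x (show 3 < 4 by decide)] at hone htwo hthree
  have hsum : layerSum G v x 0 + layerSum G v x 1 + layerSum G v x 2 + layerSum G v x 3 = 0 := by
    refine (mul_eq_zero.mp ?_).resolve_left (sub_ne_zero.mpr hk)
    linear_combination hzero + hone + htwo + hthree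
  have hsecond : c 2 * layerSum G v x 2 =
      (θ ^ 2 - (b 0 - b 1 - 1) * θ - b 0) * layerSum G v x 0 := by
    linear_combination -(θ - (b 0 - b 1 - 1)) * hzero - hone
  have hlast : (θ - (b 0 - c 3)) * (layerSum G v x 0 + layerSum G v x 1 + layerSum G v x 2) +
      b 2 * layerSum G v x 2 = 0 := by
    linear_combination (θ - (b 0 - c 3)) * hsum - hthree
  refine (mul_eq_zero.mp ?_).resolve_right (layerSum_zero h.connected (v := v) x ▸ hx)
  rw [quotientCubic]
  linear_combination c 2 * hlast + (θ - (b 0 - c 3)) * c 2 * hzero -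
    (θ - (b 0 - c 3) + b 2) * hsecond

end Eigenvalues

end IsDRG

/-- a DRG with `D = 3`, `3 ≤ k < 3(a₁+1)`, with a 3-claw but no 4-claws, has
its third largest distinct adjacency eigenvalue `θ₂ ≥ -1`. -/
theorem statement9 {V : Type*} [Fintype V] (G : SimpleGraph V) [DecidableRel G.Adj]
    (b c : ℕ → ℕ) (θ0 θ1 θ2 θ3 : ℝ)
    (hdrg : IsDRG G 3 b c) (hk : 3 ≤ b 0)
    (hk' : (b 0 : ℤ) < 3 * (((b 0 : ℤ) - b 1 - c 1) + 1))
    (hclaw3 : HasClaw G 3) (hclaw4 : ¬ HasClaw G 4)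
    (hθ0 : θ0 = (b 0 : ℝ))
    (he0 : IsAdjEigenvalue G θ0) (he1 : IsAdjEigenvalue G θ1)
    (he2 : IsAdjEigenvalue G θ2) (he3 : IsAdjEigenvalue G θ3)
    (hord : θ3 < θ2 ∧ θ2 < θ1 ∧ θ1 < θ0)
    (hall : ∀ θ, IsAdjEigenvalue G θ → θ = θ0 ∨ θ = θ1 ∨ θ = θ2 ∨ θ = θ3) :
    -1 ≤ θ2 := by
  obtain ⟨h32, h21, h10⟩ := hord
  have root {θ : ℝ} (he : IsAdjEigenvalue G θ) (hlt : θ < θ0) :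
      quotientCubic (b 0) (b 1) (b 2) (c 2) (c 3) θ = 0 :=
    hdrg.quotientCubic_eq_zero he (hθ0 ▸ hlt.ne)
  have hprod := quotientCubic_eq_prod h32 h21 (root he1 h10) (root he2 (h21.trans h10))
    (root he3 (h32.trans (h21.trans h10)))
  have hb1 := hdrg.b_one_pos (by norm_num) hclaw3
  obtain ⟨x, hx, hPx⟩ := exists_quotientCubic_nonpos (k := b 0) (b₁ := b 1) (b₂ := b 2) (c₂ := c 2)
    (c₃ := c 3) (by positivity) (by positivity) (by positivity) (by positivity)
  refine le_middle_root_of_cubic_signs h32 hx ?_ (hprod x ▸ hPx)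
  rw [← hprod, quotientCubic_neg_one]
  have hbound : (b 2 + c 3 : ℝ) ≤ b 0 + 1 :=
    mod_cast hdrg.b_two_add_c_three_le (by norm_num) hk' hclaw3 hclaw4
  exact mul_nonneg (by positivity) (by linarith)
end

section
/- Let Γ be a distance-regular graph with diameter D ≥ 3 and valency k, and let θ_1 be the second largest distinct eigenvalue of its adjacency matrix with multiplicity m_1. If θ_1 is irrational and m_1 < k, then m_1 ≥ k/2. -/
/-!
Fix a vertex `x` of valency `k` and let `m` be the multiplicity of `θ`. The vectors supported on the
neighbours of `x` and orthogonal to the `θ`-eigenspace form a space of dimension at least `k - m`.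
The `θ`-eigenspace contains, for every vertex `y`, the vector `z ↦ f (dist y z)`, where `f` is the
cosine sequence of `θ`. Orthogonality to these vectors for `y = x` and for the neighbours `y` of `x`
forces a vector on the neighbours of `x` to be an eigenvector of the local graph at `x`, with
Terwilliger's eigenvalue `-1 - b₁ / (θ + 1)`. This number is irrational along with `θ`, so it shares
its multiplicity, which is at least `k - m`, with its algebraic conjugates among the `k` eigenvalues
of the local graph. Hence `2 (k - m) ≤ k`.
-/

open SimpleGraph Finset

/-- The multiplicity of `θ` as an eigenvalue of the adjacency matrix of `G`. -/
noncomputable def adjMult {V : Type*} [Fintype V] (G : SimpleGraph V) [DecidableRel G.Adj]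
    (θ : ℝ) : ℕ :=
  Module.finrank ℝ (Module.End.eigenspace ((G.adjMatrix ℝ).mulVecLin) θ)

section RationalMatrices

open Polynomial

variable {K L : Type*} [Field K] [PerfectField K] [Field L] [Algebra K L] {η : L}

/-- Write `P` as `p ^ n * Q`, where `p` is the minimal polynomial of `η` and does not divide `Q`.
Then `η` is a root of `P` of multiplicity exactly `n`, while `p` has degree at least two. -/
lemma two_mul_rootMultiplicity_map_le_natDegree (hη : η ∉ (algebraMap K L).range) (P : K[X]) :
    2 * (P.map (algebraMap K L)).rootMultiplicity η ≤ P.natDegree := by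
  classical
  rcases eq_or_ne P 0 with rfl | hP
  · simp
  by_cases hηP : aeval η P = 0
  swap
  · rw [rootMultiplicity_eq_zero (by rwa [IsRoot, eval_map_algebraMap])]
    omega
  have hint : IsIntegral K η := isAlgebraic_iff_isIntegral.1 ⟨P, hP, hηP⟩
  have hsimple : ((minpoly K η).map (algebraMap K L)).rootMultiplicity η ≤ 1 :=
    rootMultiplicity_le_one_of_separable
      (PerfectField.separable_of_irreducible (minpoly.irreducible hint)).map η
  have htwo : 2 ≤ (minpoly K η).natDegree := (minpoly.two_le_natDegree_iff hint).2 hη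
  obtain ⟨Q, hQ, hdvd⟩ :=
    (FiniteMultiplicity.of_prime_left (minpoly.prime hint) hP).exists_eq_pow_mul_and_not_dvd
  generalize multiplicity (minpoly K η) P = n at hQ
  subst hQ
  have hηQ : (Q.map (algebraMap K L)).rootMultiplicity η = 0 :=
    rootMultiplicity_eq_zero <| by rwa [IsRoot, eval_map_algebraMap, ← minpoly.dvd_iff]
  have hmap := (Polynomial.map_ne_zero_iff (algebraMap K L).injective).2 hP
  rw [Polynomial.map_mul, Polynomial.map_pow] at hmap ⊢
  rw [rootMultiplicity_mul hmap, hηQ, add_zero, ← count_roots, roots_pow, Multiset.count_nsmul,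
    count_roots, natDegree_mul (left_ne_zero_of_mul hP) (right_ne_zero_of_mul hP), natDegree_pow]
  nlinarith

lemma two_mul_finrank_eigenspace_map_le_card {ι : Type*} [Fintype ι] (B : Matrix ι ι K)
    (hη : η ∉ (algebraMap K L).range) :
    2 * Module.finrank L (Module.End.eigenspace (B.map (algebraMap K L)).mulVecLin η) ≤
      Fintype.card ι := by
  classical
  have hgeom := LinearMap.finrank_eigenspace_le (Matrix.toLin' (B.map (algebraMap K L))) η
  rw [Matrix.charpoly_toLin', Matrix.charpoly_map, Matrix.toLin'_apply'] at hgeom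
  have halg := two_mul_rootMultiplicity_map_le_natDegree hη B.charpoly
  rw [Matrix.charpoly_natDegree_eq_dim] at halg
  omega

end RationalMatrices

lemma two_mul_adjMult_le_card_of_irrational {V : Type*} [Fintype V] (G : SimpleGraph V)
    [DecidableRel G.Adj] {η : ℝ} (hη : Irrational η) : 2 * adjMult G η ≤ Fintype.card V := by
  have hmap : (G.adjMatrix ℚ).map (algebraMap ℚ ℝ) = G.adjMatrix ℝ := by
    ext y z
    simp [apply_ite]
  rw [adjMult, ← hmap]
  exact two_mul_finrank_eigenspace_map_le_card _ (by simpa [Irrational] using hη)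

section LinearAlgebra

open Polynomial
open scoped Matrix

lemma exists_aeval_ne_zero_mul_eq_smul {K R : Type*} [Field K] [Ring R] [Algebra K R] {a : R}
    (ha : IsIntegral K a) {θ : K} (hθ : (minpoly K a).IsRoot θ) :
    ∃ q : K[X], aeval a q ≠ 0 ∧ a * aeval a q = θ • aeval a q := by
  obtain ⟨q, hq⟩ := dvd_iff_isRoot.2 hθ
  have hq0 : q ≠ 0 := right_ne_zero_of_mul (hq ▸ minpoly.ne_zero ha)
  refine ⟨q, fun hzero => ?_, ?_⟩
  · have hdeg := natDegree_le_of_dvd (minpoly.dvd K a hzero) hq0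
    rw [hq, natDegree_mul (X_sub_C_ne_zero θ) hq0, natDegree_X_sub_C] at hdeg
    omega
  · have hmin := minpoly.aeval K a
    rwa [hq, map_mul, map_sub, aeval_X, aeval_C, sub_mul, sub_eq_zero, ← Algebra.smul_def] at hmin

/-- The vectors on `ι` whose dot product with the pullback `w ∘ e` of every `w ∈ W` vanishes. For an
inclusion `e` these are the vectors supported on `ι` that are orthogonal to `W`. -/
def pullbackOrthogonal {K ι κ : Type*} [Field K] [Fintype ι] (W : Submodule K (κ → K))
    (e : ι → κ) : Submodule K (ι → K) :=
  (W.map (dotProductBilin K K ∘ₗ LinearMap.funLeft K K e)).dualCoannihilator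

variable {K ι κ : Type*} [Field K] [Fintype ι] {W : Submodule K (κ → K)} {e : ι → κ}

lemma mem_pullbackOrthogonal {v : ι → K} :
    v ∈ pullbackOrthogonal W e ↔ ∀ w ∈ W, (w ∘ e) ⬝ᵥ v = 0 :=
  (Submodule.mem_dualCoannihilator _).trans Set.forall_mem_image

lemma card_le_finrank_add_finrank_pullbackOrthogonal [Finite κ] (W : Submodule K (κ → K))
    (e : ι → κ) :
    Fintype.card ι ≤ Module.finrank K W + Module.finrank K (pullbackOrthogonal W e) := by
  rw [← Module.finrank_fintype_fun_eq_card K (η := ι), pullbackOrthogonal,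
    ← Subspace.finrank_add_finrank_dualCoannihilator_eq]
  gcongr
  exact Submodule.finrank_map_le _ _

end LinearAlgebra

lemma isRoot_minpoly_of_isAdjEigenvalue {V : Type*} [Fintype V] [DecidableEq V] {G : SimpleGraph V}
    [DecidableRel G.Adj] {θ : ℝ} (h : IsAdjEigenvalue G θ) :
    (minpoly ℝ (G.adjMatrix ℝ)).IsRoot θ := by
  obtain ⟨v, hv, hAv⟩ := h
  rw [← Matrix.minpoly_toLin', ← Module.End.hasEigenvalue_iff_isRoot]
  exact Module.End.hasEigenvalue_of_hasEigenvector ⟨Module.End.mem_eigenspace_iff.2 hAv, hv⟩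

/-- Terwilliger's eigenvalue of the local graphs of a distance-regular graph with `b 1 = β`,
attached to the eigenvalue `θ` of the graph. It has the junk value `-1` at `θ = -1`. -/
noncomputable def localEigenvalue (β θ : ℝ) : ℝ := -1 - β / (θ + 1)

lemma irrational_localEigenvalue {n : ℕ} (hn : n ≠ 0) {θ : ℝ} (hθ : Irrational θ) :
    Irrational (localEigenvalue n θ) := by
  have hquot : Irrational ((n : ℝ) / (θ + 1)) :=
    irrational_natCast_div_iff.2 ⟨hn, by simpa using hθ.add_natCast 1⟩
  simpa [localEigenvalue] using hquot.intCast_sub (-1)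

lemma dist_eq_two_of_adj_of_adj {V : Type*} {G : SimpleGraph V} {x y z : V}
    (hxy : G.Adj x y) (hxz : G.Adj x z) (hne : y ≠ z) (hnadj : ¬ G.Adj y z) : G.dist y z = 2 := by
  have hle : G.dist y z ≤ 2 := G.dist_le (.cons hxy.symm (.cons hxz .nil))
  have hlt := (hxy.symm.reachable.trans hxz.reachable).one_lt_dist_of_ne_of_not_adj hne hnadj
  omega

section Graphs

open scoped Matrix

variable {V : Type*} [Fintype V] {G : SimpleGraph V} [DecidableRel G.Adj]
  {D : ℕ} {b c : ℕ → ℕ} {θ : ℝ} {f : ℕ → ℝ}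

lemma sum_neighborSet_dist_mul (f : ℕ → ℝ) {x : V} (v : G.neighborSet x → ℝ)
    (y : G.neighborSet x) :
    ∑ z : G.neighborSet x, f (G.dist y z) * v z =
      (f 0 - f 2) * v y + (f 1 - f 2) * ((G.induce (G.neighborSet x)).adjMatrix ℝ *ᵥ v) y +
        f 2 * ∑ z, v z := by
  classical
  have hdist (z : G.neighborSet x) : f (G.dist y z) =
      (f 0 - f 2) * (1 : Matrix _ _ ℝ) y z +
        (f 1 - f 2) * (G.induce (G.neighborSet x)).adjMatrix ℝ y z + f 2 := by
    rcases eq_or_ne y z with rfl | hne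
    · simp
    by_cases hadj : G.Adj y z
    · simp [hne, hadj, dist_eq_one_iff_adj.2 hadj]
    · simp [hne, hadj, dist_eq_two_of_adj_of_adj y.2 z.2 (Subtype.coe_ne_coe.2 hne) hadj]
  calc ∑ z : G.neighborSet x, f (G.dist y z) * v z
      = (f 0 - f 2) * ((1 : Matrix _ _ ℝ) *ᵥ v) y +
          (f 1 - f 2) * ((G.induce (G.neighborSet x)).adjMatrix ℝ *ᵥ v) y + f 2 * ∑ z, v z := by
        simp only [hdist, Matrix.mulVec, dotProduct, mul_sum, ← sum_add_distrib]
        exact sum_congr rfl fun z _ => by ring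
    _ = _ := by rw [Matrix.one_mulVec]

lemma IsDRG.degree_eq (h : IsDRG G D b c) (x : V) : G.degree x = b 0 := by
  obtain ⟨-, -, -, -, -, -, hcount⟩ := h
  rw [← (hcount 0 D.zero_le x x dist_self).2, ← card_neighborSet_eq_degree,
    ← Nat.card_eq_fintype_card, Nat.card_coe_set_eq]
  congr 1
  ext z
  simp [dist_eq_one_iff_adj]

lemma sum_neighborFinset_ite_dist_eq (x y : V) (j : ℕ) (t : ℝ) :
    ∑ z ∈ G.neighborFinset y, (if G.dist x z = j then t else 0) =
      {z : V | G.Adj y z ∧ G.dist x z = j}.ncard * t := by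
  rw [← sum_filter, sum_const, nsmul_eq_mul, ← Set.ncard_coe_finset]
  congr 3
  ext z
  simp

/-- At distance `0` the truncated `0 - 1` is harmless, since `c 0 = 0`. -/
lemma IsDRG.sum_neighborFinset_dist (h : IsDRG G D b c) (f : ℕ → ℝ) (x y : V) :
    ∑ z ∈ G.neighborFinset y, f (G.dist x z) =
      c (G.dist x y) * f (G.dist x y - 1) +
        (b 0 - b (G.dist x y) - c (G.dist x y)) * f (G.dist x y) +
        b (G.dist x y) * f (G.dist x y + 1) := by
  have hdeg := h.degree_eq y
  obtain ⟨-, -, hle, -, -, -, hcount⟩ := h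
  obtain ⟨hc, hb⟩ := hcount _ (hle x y) x y rfl
  set i := G.dist x y
  rw [← hc, ← hb, ← hdeg, ← card_neighborFinset_eq_degree]
  calc ∑ z ∈ G.neighborFinset y, f (G.dist x z)
      = ∑ z ∈ G.neighborFinset y, (f i +
          (if G.dist x z = i - 1 then f (i - 1) - f i else 0) +
          (if G.dist x z = i + 1 then f (i + 1) - f i else 0)) := by
        refine sum_congr rfl fun z hz => ?_
        rcases ((G.mem_neighborFinset y z).1 hz).diff_dist_adj (u := x) with hz | hz | hz <;>
          grind
    _ = _ := by
        simp only [sum_add_distrib, sum_neighborFinset_ite_dist_eq, sum_const, nsmul_eq_mul]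
        ring

lemma IsDRG.exists_aeval_adjMatrix_apply_eq_dist [DecidableEq V] (h : IsDRG G D b c)
    (q : Polynomial ℝ) :
    ∃ g : ℕ → ℝ, ∀ x y, Polynomial.aeval (G.adjMatrix ℝ) q x y = g (G.dist x y) := by
  induction q using Polynomial.induction_on with
  | C a =>
    refine ⟨fun i => if i = 0 then a else 0, fun x y => ?_⟩
    simp [Polynomial.aeval_C, Matrix.algebraMap_matrix_apply, h.1.dist_eq_zero_iff]
  | add p q hp hq =>
    obtain ⟨f, hf⟩ := hp
    obtain ⟨g, hg⟩ := hq
    exact ⟨f + g, fun x y => by simp [hf, hg]⟩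
  | monomial n a ih =>
    obtain ⟨g, hg⟩ := ih
    refine ⟨fun i => c i * g (i - 1) + (b 0 - b i - c i) * g i + b i * g (i + 1), fun x y => ?_⟩
    rw [pow_succ, ← mul_assoc, map_mul, Polynomial.aeval_X, mul_adjMatrix_apply]
    simp only [hg, h.sum_neighborFinset_dist g x y]

/-- `f` is the cosine sequence of the eigenvalue `θ` of a distance-regular graph: for each vertex
`x` the function `f (dist x ·)` is a `θ`-eigenvector, and `f` is normalised by `f 0 = 1`. The values
of `f` at distances not occurring in `G` are arbitrary. -/
def IsCosineSequence (G : SimpleGraph V) [DecidableRel G.Adj] (θ : ℝ) (f : ℕ → ℝ) : Prop :=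
  f 0 = 1 ∧ ∀ x, (fun y => f (G.dist x y)) ∈ Module.End.eigenspace (G.adjMatrix ℝ).mulVecLin θ

lemma isCosineSequence_of_adjMatrix_mul_eq_smul {M : Matrix V V ℝ} {g : ℕ → ℝ}
    (hg : ∀ x y, M x y = g (G.dist x y)) (hM : G.adjMatrix ℝ * M = θ • M) (h0 : g 0 ≠ 0) :
    IsCosineSequence G θ (fun i => (g 0)⁻¹ * g i) := by
  refine ⟨inv_mul_cancel₀ h0, fun x => Submodule.smul_mem _ (g 0)⁻¹ ?_⟩
  have hcol : (fun y => g (G.dist x y)) = M.col x := by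
    ext y
    rw [Matrix.col_apply, hg, dist_comm]
  rw [hcol, Module.End.mem_eigenspace_iff]
  ext y
  exact congrFun (congrFun hM y) x

/-- The minimal polynomial of the adjacency matrix `A` yields a nonzero polynomial `M` in `A` with
`A * M = θ • M`. It may have zero diagonal, but it is symmetric, so that `M * M` does not. -/
lemma IsDRG.exists_isCosineSequence (h : IsDRG G D b c) (he : IsAdjEigenvalue G θ) :
    ∃ f, IsCosineSequence G θ f := by
  classical
  obtain ⟨q, hq, hAq⟩ := exists_aeval_ne_zero_mul_eq_smul
    (Algebra.IsIntegral.isIntegral (R := ℝ) (G.adjMatrix ℝ)) (isRoot_minpoly_of_isAdjEigenvalue he)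
  obtain ⟨g, hg⟩ := h.exists_aeval_adjMatrix_apply_eq_dist q
  obtain ⟨g₂, hg₂⟩ := h.exists_aeval_adjMatrix_apply_eq_dist (q * q)
  rw [map_mul] at hg₂
  set M := Polynomial.aeval (G.adjMatrix ℝ) q
  have hA : G.adjMatrix ℝ * (M * M) = θ • (M * M) := by rw [← mul_assoc, hAq, smul_mul_assoc]
  refine ⟨_, isCosineSequence_of_adjMatrix_mul_eq_smul hg₂ hA fun hzero => hq ?_⟩
  have hsymm : Mᵀ = M := by
    ext x y
    rw [Matrix.transpose_apply, hg, hg, dist_comm]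
  ext x y
  have hdiag : M x ⬝ᵥ M x = 0 := calc
    M x ⬝ᵥ M x = (M * Mᵀ) x x := rfl
    _ = 0 := by rw [hsymm, hg₂, dist_self, hzero]
  exact congrFun (dotProduct_self_eq_zero.1 hdiag) y

lemma IsCosineSequence.recurrence (hf : IsCosineSequence G θ f) (h : IsDRG G D b c) (x y : V) :
    c (G.dist x y) * f (G.dist x y - 1) +
        (b 0 - b (G.dist x y) - c (G.dist x y)) * f (G.dist x y) +
        b (G.dist x y) * f (G.dist x y + 1) = θ * f (G.dist x y) := by
  rw [← h.sum_neighborFinset_dist, ← adjMatrix_mulVec_apply G y fun z => f (G.dist x z)]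
  exact congrFun (Module.End.mem_eigenspace_iff.1 (hf.2 x)) y

lemma IsCosineSequence.valency_mul_apply_one (hf : IsCosineSequence G θ f) (h : IsDRG G D b c) :
    b 0 * f 1 = θ := by
  obtain ⟨x⟩ := h.1.nonempty
  have hrec := hf.recurrence h x x
  obtain ⟨-, -, -, hc0, -⟩ := h
  simpa [hf.1, hc0] using hrec

lemma IsCosineSequence.valency_mul_sub (hf : IsCosineSequence G θ f) (h : IsDRG G D b c)
    {x y : V} (hxy : G.Adj x y) :
    b 0 * (b 1 * (f 1 - f 2)) = (b 0 - θ) * (θ + 1) := by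
  have hk := hf.valency_mul_apply_one h
  have hrec := hf.recurrence h x y
  obtain ⟨-, -, -, -, hc1, -⟩ := h
  norm_num [dist_eq_one_iff_adj.2 hxy, hf.1, hc1] at hrec
  linear_combination (-(b 0 : ℝ)) * hrec + (b 0 - 1 - θ) * hk

lemma IsCosineSequence.b_one_mul_sub_ne_zero (hf : IsCosineSequence G θ f) (h : IsDRG G D b c)
    {x y : V} (hxy : G.Adj x y) (hθ_neg : θ ≠ -1) (hθ_val : θ ≠ b 0) :
    (b 1 : ℝ) * (f 1 - f 2) ≠ 0 := by
  refine right_ne_zero_of_mul (a := (b 0 : ℝ)) ?_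
  rw [hf.valency_mul_sub h hxy]
  exact mul_ne_zero (sub_ne_zero.2 hθ_val.symm) (by rwa [Ne, add_eq_zero_iff_eq_neg])

lemma IsCosineSequence.adjMatrix_induce_mulVec_eq (hf : IsCosineSequence G θ f)
    (h : IsDRG G D b c) (hθ : θ ≠ 0) (hθ_neg : θ ≠ -1) (hθ_val : θ ≠ b 0) {x : V}
    {v : G.neighborSet x → ℝ}
    (hv : v ∈ pullbackOrthogonal (Module.End.eigenspace (G.adjMatrix ℝ).mulVecLin θ)
      ((↑) : G.neighborSet x → V)) :
    (G.induce (G.neighborSet x)).adjMatrix ℝ *ᵥ v = localEigenvalue (b 1) θ • v := by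
  rw [mem_pullbackOrthogonal] at hv
  have hk := hf.valency_mul_apply_one h
  have hf1 : f 1 ≠ 0 := right_ne_zero_of_mul (hk ▸ hθ)
  have hsum : ∑ z, v z = 0 := by
    have hx : ∑ z : G.neighborSet x, f (G.dist x z) * v z = 0 := hv _ (hf.2 x)
    have hdist (z : G.neighborSet x) : G.dist x z = 1 := dist_eq_one_iff_adj.2 z.2
    simpa only [hdist, ← mul_sum, mul_eq_zero, hf1, false_or] using hx
  ext y
  set s := ((G.induce (G.neighborSet x)).adjMatrix ℝ *ᵥ v) y
  have hlocal : (1 - f 2) * v y + (f 1 - f 2) * s = 0 := by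
    have hy : ∑ z : G.neighborSet x, f (G.dist y z) * v z = 0 := hv _ (hf.2 y)
    rwa [sum_neighborSet_dist_mul, hsum, hf.1, mul_zero, add_zero] at hy
  have hθ1 : θ + 1 ≠ 0 := by rwa [Ne, add_eq_zero_iff_eq_neg]
  have hscaled : b 0 * (f 1 - f 2) * (θ + 1) * (s - localEigenvalue (b 1) θ * v y) = 0 := by
    rw [localEigenvalue]
    field_simp
    linear_combination
      b 0 * (θ + 1) * hlocal + v y * hf.valency_mul_sub h y.2 + (θ + 1) * v y * hk
  have hk0 : (b 0 : ℝ) ≠ 0 := left_ne_zero_of_mul (hk ▸ hθ)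
  have hgap : f 1 - f 2 ≠ 0 :=
    right_ne_zero_of_mul (hf.b_one_mul_sub_ne_zero h y.2 hθ_neg hθ_val)
  simpa [sub_eq_zero, hk0, hgap, hθ1] using hscaled

end Graphs

theorem statement11_general {V : Type*} [Fintype V] (G : SimpleGraph V) [DecidableRel G.Adj]
    (D : ℕ) (b c : ℕ → ℕ) (θ : ℝ) (hdrg : IsDRG G D b c) (he : IsAdjEigenvalue G θ)
    (hirr : Irrational θ) : b 0 ≤ 2 * adjMult G θ := by
  obtain ⟨f, hf⟩ := hdrg.exists_isCosineSequence he
  obtain ⟨x⟩ := hdrg.1.nonempty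
  have hcard : Fintype.card (G.neighborSet x) = b 0 := by
    rw [card_neighborSet_eq_degree, hdrg.degree_eq]
  rcases (b 0).eq_zero_or_pos with hzero | hpos
  · omega
  obtain ⟨y⟩ : Nonempty (G.neighborSet x) := Fintype.card_pos_iff.1 (hcard ▸ hpos)
  have hθ_neg : θ ≠ -1 := by simpa using hirr.ne_int (-1)
  have hb1 : b 1 ≠ 0 := Nat.cast_ne_zero.1 <|
    left_ne_zero_of_mul (hf.b_one_mul_sub_ne_zero hdrg y.2 hθ_neg (hirr.ne_nat _))
  have hlocal : pullbackOrthogonal (Module.End.eigenspace (G.adjMatrix ℝ).mulVecLin θ)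
      ((↑) : G.neighborSet x → V) ≤ Module.End.eigenspace
        ((G.induce (G.neighborSet x)).adjMatrix ℝ).mulVecLin (localEigenvalue (b 1) θ) :=
    fun v hv => Module.End.mem_eigenspace_iff.2 <|
      hf.adjMatrix_induce_mulVec_eq hdrg hirr.ne_zero hθ_neg (hirr.ne_nat _) hv
  have hdim : b 0 ≤ adjMult G θ + adjMult (G.induce (G.neighborSet x)) (localEigenvalue (b 1) θ) :=
    hcard ▸ (card_le_finrank_add_finrank_pullbackOrthogonal _ _).trans
      (Nat.add_le_add_left (Submodule.finrank_mono hlocal) _)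
  have hhalf := two_mul_adjMult_le_card_of_irrational (G.induce (G.neighborSet x))
    (irrational_localEigenvalue hb1 hirr)
  omega

/-- if the second largest distinct adjacency eigenvalue `θ₁` of a DRG with
`D ≥ 3` is irrational and its multiplicity `m₁` satisfies `m₁ < k`, then `m₁ ≥ k/2`. -/
theorem statement11 {V : Type*} [Fintype V] (G : SimpleGraph V) [DecidableRel G.Adj]
    (D : ℕ) (b c : ℕ → ℕ) (θ1 : ℝ)
    (hdrg : IsDRG G D b c) (hD : 3 ≤ D)
    (he1 : IsAdjEigenvalue G θ1) (hlt : θ1 < (b 0 : ℝ))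
    (hsec : ∀ θ, IsAdjEigenvalue G θ → θ = (b 0 : ℝ) ∨ θ ≤ θ1)
    (hirr : Irrational θ1) (hm : adjMult G θ1 < b 0) :
    b 0 ≤ 2 * adjMult G θ1 :=
  statement11_general G D b c θ1 hdrg he1 hirr
end

section
/- There is no 4-claw-free distance-regular graph with diameter 3 whose intersection array is {10,6,1;1,3,10}, {27,16,4;1,2,24}, {45,28,4;1,2,42}, or {65,40,16;1,4,50}. -/
/-!
In the last three cases the local graph at a vertex has `b₀` vertices and closed neighbourhoods of
size `b₀ - b₁`, so choosing greedily one finds three pairwise nonadjacent vertices in it. Their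
closed neighbourhoods meet pairwise in at most `c₂ - 1` vertices, and do not fit into `b₀` vertices.

A graph with array `{rμ+1, (r-1)μ, 1; 1, μ, rμ+1}` is an antipodal `r`-cover of the complete graph
on `n = rμ+2` vertices. If `A` is its adjacency matrix and `J` the all-one matrix, then `rA - J` has
eigenvalue `-r` on the vectors constant on fibres and `±r√(rμ+1)` on their orthogonal complement.
Bordering it by the incidence matrix of points and fibres turns it into an integral matrix `M` with
`M² = r²(rμ+1) I` which is self-adjoint for the form `I ⊕ μI`. For a prime `p` dividing `rμ+1`
exactly once, the kernel and the image of `M` modulo `p` coincide, so this is a totally isotropic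
subspace of half the dimension and `±μⁿ` is a square modulo `p`. For `{10,6,1;1,3,10}` the value is
`3¹¹`, which is not a square modulo `5`.
-/

open SimpleGraph Finset

section QuadraticForm

open Matrix Module

theorem det_fromBlocks_zero₁₁ {R m : Type*} [CommRing R] [Fintype m] [DecidableEq m]
    (B C E : Matrix m m R) :
    (fromBlocks 0 B C E).det = (-1) ^ Fintype.card m * (B.det * C.det) := by
  have swap_columns : fromBlocks 0 B C E =
      fromBlocks B 0 E C * (fromBlocks 1 (-1) 0 1 * fromBlocks 1 1 1 0) := by
    simp [fromBlocks_multiply]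
  rw [swap_columns, det_mul, det_mul, det_fromBlocks_zero₁₂, det_fromBlocks_zero₂₁,
    det_fromBlocks_one₁₁]
  simp [det_neg, mul_comm]

theorem det_eq_of_isSymm_of_toBlocks₁₁_eq_zero {R m : Type*} [CommRing R] [Fintype m]
    [DecidableEq m] {Q : Matrix (m ⊕ m) (m ⊕ m) R} (hQ : Q.IsSymm) (h : Q.toBlocks₁₁ = 0) :
    Q.det = (-1) ^ Fintype.card m * Q.toBlocks₁₂.det ^ 2 := by
  have h₂₁ : Q.toBlocks₂₁ = Q.toBlocks₁₂ᵀ := Matrix.ext fun i j ↦ hQ.apply (.inl j) (.inr i)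
  rw [← fromBlocks_toBlocks Q, h, h₂₁, det_fromBlocks_zero₁₁, det_transpose, toBlocks_fromBlocks₁₂,
    sq]

theorem isSquare_det_of_isotropic {K n : Type*} [Field K] [Fintype n] [DecidableEq n]
    {Q : Matrix n n K} (hQ : Q.IsSymm) {W : Submodule K (n → K)}
    (hW : ∀ x ∈ W, ∀ y ∈ W, x ⬝ᵥ Q *ᵥ y = 0) (hcard : Fintype.card n = 2 * finrank K W) :
    IsSquare ((-1) ^ finrank K W * Q.det) := by
  obtain ⟨W', hWW'⟩ := W.exists_isCompl
  have hrank : finrank K W' = finrank K W := by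
    have := Submodule.finrank_add_eq_of_isCompl hWW'
    rw [finrank_fintype_fun_eq_card] at this
    omega
  let m := Fin (finrank K W)
  let basis : Basis (m ⊕ m) K (n → K) :=
    ((finBasis K W).prod (finBasisOfFinrankEq K W' hrank)).map (W.prodEquivOfIsCompl W' hWW')
  let e : n ≃ m ⊕ m := Fintype.equivOfCardEq (by simp [m, hcard, two_mul])
  let P : Matrix n (m ⊕ m) K := of fun i j ↦ basis j i
  have hP : (P.submatrix id e).det ≠ 0 := by
    rw [← isUnit_iff_ne_zero, ← isUnit_iff_isUnit_det, ← linearIndependent_cols_iff_isUnit]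
    exact basis.linearIndependent.comp e e.injective
  let gram := Pᵀ * Q * P
  have hgram (i j) : gram i j = basis i ⬝ᵥ Q *ᵥ basis j := by
    rw [show gram = Pᵀ * (Q * P) from Matrix.mul_assoc ..]; rfl
  have gram_symm : gram.IsSymm := by simp [gram, IsSymm, Matrix.mul_assoc, hQ.eq]
  have gram_isotropic : gram.toBlocks₁₁ = 0 := by
    ext i j
    rw [toBlocks₁₁, of_apply, hgram]
    exact hW _ (by simp [basis]) _ (by simp [basis])
  have hdet : (P.submatrix id e).det ^ 2 * Q.det =
      (-1) ^ finrank K W * gram.toBlocks₁₂.det ^ 2 := by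
    calc (P.submatrix id e).det ^ 2 * Q.det
        = ((P.submatrix id e)ᵀ * Q * P.submatrix id e).det := by
          rw [det_mul, det_mul, det_transpose]; ring
      _ = (gram.submatrix e e).det := rfl
      _ = _ := by
          rw [det_submatrix_equiv_self,
            det_eq_of_isSymm_of_toBlocks₁₁_eq_zero gram_symm gram_isotropic, Fintype.card_fin]
  have hsign : ((-1 : K) ^ finrank K W) ^ 2 = 1 := by rw [pow_right_comm, neg_one_sq, one_pow]
  refine ⟨gram.toBlocks₁₂.det / (P.submatrix id e).det, ?_⟩
  rw [div_mul_div_comm, eq_div_iff (mul_ne_zero hP hP)]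
  linear_combination (-1) ^ finrank K W * hdet + gram.toBlocks₁₂.det ^ 2 * hsign

variable {n : Type*} [Fintype n] [DecidableEq n] {p : ℕ} [Fact p.Prime]
  {Q M : Matrix n n ℤ} {N : ℤ}

theorem exists_mulVec_eq_of_mulVec_eq_zero (hM : M * M = N • 1) (hpN : (p : ℤ) ∣ N)
    (hpN' : ¬ (p : ℤ) ^ 2 ∣ N) {x : n → ZMod p}
    (hx : (Int.castRingHom (ZMod p)).mapMatrix M *ᵥ x = 0) :
    ∃ y, (Int.castRingHom (ZMod p)).mapMatrix M *ᵥ y = x := by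
  have cast_mulVec (v : n → ℤ) :
      (Int.castRingHom (ZMod p)).mapMatrix M *ᵥ (fun i ↦ (v i : ZMod p)) =
        fun i ↦ ((M *ᵥ v) i : ZMod p) :=
    funext fun i ↦ ((Int.castRingHom (ZMod p)).map_mulVec M v i).symm
  have hp : (p : ℤ) ≠ 0 := by exact_mod_cast (Fact.out : p.Prime).ne_zero
  obtain ⟨N', rfl⟩ := hpN
  have hN' : (N' : ZMod p) ≠ 0 := by
    rwa [Ne, ZMod.intCast_zmod_eq_zero_iff_dvd, ← mul_dvd_mul_iff_left hp, ← sq]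
  -- For an integral lift `z` of `x`, `M z = p y` gives `p (M y) = M² z = p N' z`.
  choose z hz using fun i ↦ ZMod.intCast_surjective (x i)
  obtain rfl : (fun i ↦ (z i : ZMod p)) = x := funext hz
  have hdvd (i) : (p : ℤ) ∣ (M *ᵥ z) i := by
    rw [← ZMod.intCast_zmod_eq_zero_iff_dvd]
    exact congrFun ((cast_mulVec z).symm.trans hx) i
  choose y hy using hdvd
  have hMy : M *ᵥ y = N' • z := by
    have : (p : ℤ) • M *ᵥ y = (p : ℤ) • N' • z := by
      rw [← mulVec_smul, show (p : ℤ) • y = M *ᵥ z from (funext hy).symm, mulVec_mulVec, hM,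
        smul_mulVec, one_mulVec, mul_smul]
    exact smul_right_injective _ hp this
  refine ⟨(N' : ZMod p)⁻¹ • fun i ↦ (y i : ZMod p), ?_⟩
  rw [mulVec_smul, cast_mulVec, hMy]
  ext i
  simp [hN']

theorem isSquare_det_of_isSelfAdjoint_of_mul_self_eq_smul (hQ : Q.IsSymm)
    (hQM : Q.IsSelfAdjoint M) (hM : M * M = N • 1) (hpN : (p : ℤ) ∣ N) (hpN' : ¬ (p : ℤ) ^ 2 ∣ N) :
    IsSquare ((-1) ^ (Fintype.card n / 2) * (Q.det : ZMod p)) := by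
  let φ := (Int.castRingHom (ZMod p)).mapMatrix (m := n)
  have hN : (N : ZMod p) = 0 := (ZMod.intCast_zmod_eq_zero_iff_dvd N p).2 hpN
  have hMM : φ M * φ M = 0 := by
    rw [← map_mul, hM, map_zsmul, map_one, ← Int.cast_smul_eq_zsmul (ZMod p), hN, zero_smul]
  have hQM' : (φ M)ᵀ * φ Q = φ Q * φ M := by
    rw [← map_mul, ← show Mᵀ * Q = Q * M from hQM, map_mul]
    rfl
  have hker : LinearMap.ker (φ M).mulVecLin = LinearMap.range (φ M).mulVecLin := by
    ext x
    constructor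
    · exact exists_mulVec_eq_of_mulVec_eq_zero hM hpN hpN'
    · rintro ⟨y, rfl⟩
      simp [hMM]
  have hcard : Fintype.card n = 2 * finrank (ZMod p) (LinearMap.range (φ M).mulVecLin) := by
    have := (φ M).mulVecLin.finrank_range_add_finrank_ker
    rw [hker, finrank_fintype_fun_eq_card] at this
    omega
  have hdet : (φ Q).det = Q.det := ((Int.castRingHom (ZMod p)).map_det Q).symm
  rw [← hdet, hcard, Nat.mul_div_cancel_left _ two_pos]
  refine isSquare_det_of_isotropic (hQ.map _) ?_ hcard
  rintro _ ⟨x, rfl⟩ _ ⟨y, rfl⟩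
  calc (φ M).mulVecLin x ⬝ᵥ φ Q *ᵥ (φ M).mulVecLin y = x ⬝ᵥ ((φ M)ᵀ * φ Q * φ M) *ᵥ y := by
        simp only [mulVecLin_apply, ← mulVec_mulVec, dotProduct_mulVec, vecMul_transpose]
    _ = 0 := by rw [hQM', Matrix.mul_assoc, hMM]; simp

end QuadraticForm

section Claws

variable {V : Type*} {G : SimpleGraph V}

theorem dist_eq_two_iff {x y : V} :
    G.dist x y = 2 ↔ x ≠ y ∧ ¬ G.Adj x y ∧ ∃ z, G.Adj x z ∧ G.Adj y z := by
  rw [SimpleGraph.dist, ENat.toNat_eq_iff two_ne_zero]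
  exact edist_eq_two_iff

/-- The sets `insert y (G.neighborFinset x ∩ G.neighborFinset y)` are the closed neighbourhoods of
the local graph at `x`. -/
theorem exists_pairwise_not_adj [DecidableEq V] [G.LocallyFinite] {x : V} {m t : ℕ}
    (hm : ∀ y, G.Adj x y → #(insert y (G.neighborFinset x ∩ G.neighborFinset y)) ≤ m)
    (ht : t * m < G.degree x + m) :
    ∃ s ⊆ G.neighborFinset x, #s = t ∧ (s : Set V).Pairwise fun y z ↦ ¬ G.Adj y z := by
  induction t with
  | zero => exact ⟨∅, by simp⟩
  | succ t ih =>
    obtain ⟨s, hsx, rfl, hs⟩ := ih (by lia)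
    have hlt : #(s.biUnion fun y ↦ insert y (G.neighborFinset x ∩ G.neighborFinset y)) <
        #(G.neighborFinset x) := by
      have := card_biUnion_le_card_mul s _ m fun y hy ↦ hm y (by simpa using hsx hy)
      rw [G.card_neighborFinset_eq_degree]
      lia
    obtain ⟨z, hzx, hz⟩ := exists_mem_notMem_of_card_lt_card hlt
    simp only [mem_biUnion, mem_insert, mem_inter, hzx, true_and, not_exists, not_and, not_or]
      at hz
    have hzs : z ∉ s := fun h ↦ (hz z h).1 rfl
    refine ⟨insert z s, insert_subset hzx hsx, card_insert_of_notMem hzs, ?_⟩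
    rw [coe_insert]
    refine hs.insert fun y hy _ ↦ ⟨fun h ↦ ?_, fun h ↦ ?_⟩
    · exact (hz y hy).2 (by simpa using h.symm)
    · exact (hz y hy).2 (by simpa using h)

theorem sum_card_le_card_biUnion_add_choose_two_mul {α β : Type*} [DecidableEq β]
    {s : Finset α} {A : α → Finset β} {m : ℕ}
    (h : (s : Set α).Pairwise fun i j ↦ #(A i ∩ A j) ≤ m) :
    ∑ i ∈ s, #(A i) ≤ #(s.biUnion A) + (#s).choose 2 * m := by
  classical
  induction s using Finset.induction_on with
  | empty => simp
  | insert i s hi ih =>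
    rw [coe_insert, Set.pairwise_insert_of_notMem (mod_cast hi)] at h
    have hinter : #(A i ∩ s.biUnion A) ≤ #s * m := by
      rw [inter_biUnion]
      exact card_biUnion_le_card_mul _ _ _ fun j hj ↦ (h.2 j hj).1
    have hunion := card_union_add_card_inter (A i) (s.biUnion A)
    have := ih h.1
    rw [sum_insert hi, biUnion_insert, card_insert_of_notMem hi, Nat.choose_succ_succ' (#s) 1,
      Nat.choose_one_right, add_mul]
    lia

end Claws

namespace IsDRG

variable {V : Type*} [Fintype V] {G : SimpleGraph V} {D : ℕ} {b c : ℕ → ℕ}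

section Counting

variable [DecidableRel G.Adj]

theorem card_adj_dist_pred (h : IsDRG G D b c) {x y : V} {i : ℕ} (hxy : G.dist x y = i) :
    #{z | G.Adj y z ∧ G.dist x z = i - 1} = c i := by
  obtain ⟨-, -, hD, -, -, -, h⟩ := h
  rw [← (h i (hxy ▸ hD x y) x y hxy).1, ← Set.ncard_coe_finset]
  simp

theorem card_adj_dist_succ (h : IsDRG G D b c) {x y : V} {i : ℕ} (hxy : G.dist x y = i) :
    #{z | G.Adj y z ∧ G.dist x z = i + 1} = b i := by
  obtain ⟨-, -, hD, -, -, -, h⟩ := h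
  rw [← (h i (hxy ▸ hD x y) x y hxy).2, ← Set.ncard_coe_finset]
  simp

theorem degree_eq_s15 (h : IsDRG G D b c) (x : V) : G.degree x = b 0 := by
  rw [← h.card_adj_dist_succ (x := x) G.dist_self, ← G.card_neighborFinset_eq_degree]
  congr 1
  ext z
  simp [SimpleGraph.dist_eq_one_iff_adj]

theorem card_insert_commonNeighbors_add [DecidableEq V] (h : IsDRG G D b c) {x y : V}
    (hxy : G.Adj x y) :
    #(insert y (G.neighborFinset x ∩ G.neighborFinset y)) + b 1 = b 0 := by
  have dist_le_two {z : V} (hz : G.Adj x z) : G.dist y z ≤ 2 := by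
    have := h.1.dist_triangle (u := y) (v := x) (w := z)
    rwa [dist_eq_one_iff_adj.2 hxy.symm, dist_eq_one_iff_adj.2 hz] at this
  rw [add_comm, ← h.card_adj_dist_succ (dist_eq_one_iff_adj.2 hxy.symm), ← h.degree_eq_s15 x,
    ← G.card_neighborFinset_eq_degree,
    ← card_filter_add_card_filter_not (s := G.neighborFinset x) (G.dist y · = 2)]
  congr 1
  · congr 1
    ext z
    simp
  · congr 1
    ext z
    simp only [mem_insert, mem_inter, mem_neighborFinset, mem_filter,
      ← dist_eq_one_iff_adj (u := y)]
    constructor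
    · rintro (rfl | ⟨hz, hyz⟩)
      · exact ⟨hxy, by simp⟩
      · exact ⟨hz, by lia⟩
    · rintro ⟨hz, hne⟩
      have := dist_le_two hz
      obtain h0 | h1 : G.dist y z = 0 ∨ G.dist y z = 1 := by lia
      · exact .inl (h.1.dist_eq_zero_iff.1 h0).symm
      · exact .inr ⟨hz, h1⟩

theorem card_commonNeighbors_of_adj [DecidableEq V] (h : IsDRG G D b c) {x y : V}
    (hxy : G.Adj x y) :
    #(G.neighborFinset x ∩ G.neighborFinset y) + 1 + b 1 = b 0 := by
  rw [← h.card_insert_commonNeighbors_add hxy, card_insert_of_notMem (by simp)]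

theorem card_commonNeighbors_of_dist_eq_two [DecidableEq V] (h : IsDRG G D b c) {x y : V}
    (hxy : G.dist x y = 2) :
    #(G.neighborFinset x ∩ G.neighborFinset y) = c 2 := by
  rw [← h.card_adj_dist_pred hxy]
  congr 1
  ext z
  simp [SimpleGraph.dist_eq_one_iff_adj, and_comm]

end Counting

theorem card_sphere_mul (h : IsDRG G D b c) (x : V) (i : ℕ) :
    #{y | G.dist x y = i} * b i = #{y | G.dist x y = i + 1} * c (i + 1) := by
  classical
  refine card_mul_eq_card_mul (fun y z ↦ G.Adj y z) (fun y hy ↦ ?_) fun y hy ↦ ?_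
  · rw [← h.card_adj_dist_succ (mem_filter_univ y |>.1 hy)]
    congr 1
    ext z
    simp [bipartiteAbove, and_comm]
  · rw [← h.card_adj_dist_pred (mem_filter_univ y |>.1 hy)]
    congr 1
    ext z
    simp [bipartiteBelow, and_comm, G.adj_comm]

theorem hasClaw_of_mul_lt (h : IsDRG G D b c) {t : ℕ}
    (ht : t * (b 0 - b 1) < b 0 + (b 0 - b 1)) : HasClaw G t := by
  classical
  obtain ⟨x⟩ := h.1.nonempty
  obtain ⟨s, hsx, hst, hs⟩ := exists_pairwise_not_adj (G := G) (x := x) (m := b 0 - b 1)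
    (fun y hy ↦ (Nat.eq_sub_of_add_eq (h.card_insert_commonNeighbors_add hy)).le)
    (by rwa [h.degree_eq_s15])
  exact ⟨x, s, hst, fun y hy ↦ by simpa using hsx hy, hs⟩

theorem mul_le_of_hasClaw (h : IsDRG G D b c) {t : ℕ} (ht : HasClaw G t) :
    t * (b 0 - b 1) ≤ b 0 + t.choose 2 * (c 2 - 1) := by
  classical
  obtain ⟨x, s, rfl, hsx, hs⟩ := ht
  let A (y : V) : Finset V := insert y (G.neighborFinset x ∩ G.neighborFinset y)
  have card_A {y : V} (hy : y ∈ s) : #(A y) = b 0 - b 1 :=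
    Nat.eq_sub_of_add_eq (h.card_insert_commonNeighbors_add (hsx y hy))
  have card_biUnion_A : #(s.biUnion A) ≤ b 0 := by
    rw [← h.degree_eq_s15 x, ← G.card_neighborFinset_eq_degree]
    refine card_le_card (biUnion_subset.2 fun y hy ↦ insert_subset ?_ inter_subset_left)
    simpa using hsx y hy
  have card_inter_A : (s : Set V).Pairwise fun y z ↦ #(A y ∩ A z) ≤ c 2 - 1 := by
    intro y hy z hz hyz
    have hnadj : ¬ G.Adj y z := hs hy hz hyz
    have hdist : G.dist y z = 2 :=
      dist_eq_two_iff.2 ⟨hyz, hnadj, x, (hsx y hy).symm, (hsx z hz).symm⟩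
    rw [← h.card_commonNeighbors_of_dist_eq_two hdist,
      ← card_erase_of_mem (a := x) (by simp [(hsx y hy).symm, (hsx z hz).symm])]
    refine card_le_card fun w hw ↦ ?_
    simp only [A, mem_inter, mem_insert, mem_neighborFinset, mem_erase] at hw ⊢
    grind [G.adj_comm, G.ne_of_adj]
  calc #s * (b 0 - b 1) = ∑ y ∈ s, #(A y) := by rw [sum_congr rfl fun y ↦ card_A, sum_const]; rfl
    _ ≤ #(s.biUnion A) + (#s).choose 2 * (c 2 - 1) :=
      sum_card_le_card_biUnion_add_choose_two_mul card_inter_A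
    _ ≤ b 0 + (#s).choose 2 * (c 2 - 1) := by gcongr

theorem mul_sub_le (h : IsDRG G D b c) {t : ℕ} (ht : t * (b 0 - b 1) < b 0 + (b 0 - b 1)) :
    t * (b 0 - b 1) ≤ b 0 + t.choose 2 * (c 2 - 1) :=
  h.mul_le_of_hasClaw (h.hasClaw_of_mul_lt ht)

end IsDRG

namespace IsDRG

section Antipodal

variable {V : Type*} [Fintype V] {G : SimpleGraph V} {b c : ℕ → ℕ} {x y z : V}

theorem dist_eq_two_of_adj_of_dist_eq_three (h : IsDRG G 3 b c) (hc₃ : c 3 = b 0)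
    (hxy : G.dist x y = 3) (hyz : G.Adj y z) : G.dist x z = 2 := by
  classical
  have heq : univ.filter (fun z ↦ G.Adj y z ∧ G.dist x z = 3 - 1) = G.neighborFinset y := by
    refine eq_of_subset_of_card_le (fun z hz ↦ by simpa using (mem_filter_univ z |>.1 hz).1) ?_
    rw [h.card_adj_dist_pred hxy, hc₃, G.card_neighborFinset_eq_degree, h.degree_eq_s15]
  exact (mem_filter_univ z |>.1 (heq ▸ (G.mem_neighborFinset y z).2 hyz)).2

theorem eq_of_dist_eq_three (h : IsDRG G 3 b c) (hb₂ : b 2 = 1) {w : V} (hxw : G.dist x w = 2)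
    (hwy : G.Adj w y) (hwz : G.Adj w z) (hxy : G.dist x y = 3) (hxz : G.dist x z = 3) : y = z := by
  classical
  refine card_le_one.1 ((h.card_adj_dist_succ hxw).trans hb₂).le y ?_ z ?_ <;>
    simp only [mem_filter_univ] <;> exact ⟨by assumption, by assumption⟩

theorem dist_eq_three_trans (h : IsDRG G 3 b c) (hb₂ : b 2 = 1) (hc₃ : c 3 = b 0)
    (hxy : G.dist x y = 3) (hxz : G.dist x z = 3) (hyz : y ≠ z) : G.dist y z = 3 := by
  have hpos := h.1.pos_dist_of_ne hyz
  have hle := h.2.2.1 y z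
  have hne_one : G.dist y z ≠ 1 := fun h₁ ↦ by
    have := h.dist_eq_two_of_adj_of_dist_eq_three hc₃ hxy (dist_eq_one_iff_adj.1 h₁)
    lia
  have hne_two : G.dist y z ≠ 2 := fun h₂ ↦ by
    obtain ⟨-, -, w, hyw, hzw⟩ := dist_eq_two_iff.1 h₂
    have hxw := h.dist_eq_two_of_adj_of_dist_eq_three hc₃ hxy hyw
    exact hyz (h.eq_of_dist_eq_three hb₂ hxw hyw.symm hzw.symm hxy hxz)
  lia

/-- The equivalence relation whose classes are the antipodal classes (fibres) of an antipodal
distance-regular graph of diameter 3. -/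
def antipodalSetoid (h : IsDRG G 3 b c) (hb₂ : b 2 = 1) (hc₃ : c 3 = b 0) : Setoid V where
  r x y := x = y ∨ G.dist x y = 3
  iseqv := by
    refine ⟨fun _ ↦ .inl rfl, fun {x y} hxy ↦ hxy.imp Eq.symm G.dist_comm.trans, ?_⟩
    rintro x y z (rfl | hxy) (rfl | hyz)
    · exact .inl rfl
    · exact .inr hyz
    · exact .inr hxy
    · rw [G.dist_comm] at hxy
      exact or_iff_not_imp_left.2 (h.dist_eq_three_trans hb₂ hc₃ hxy hyz)

end Antipodal

end IsDRG

/-- `f` is the quotient map of `G` onto the set of its antipodal classes, for `G` of diameter 3. -/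
structure IsAntipodalQuotient {V ι : Type*} (G : SimpleGraph V) (f : V → ι) : Prop where
  surjective : f.Surjective
  apply_eq_iff {x y : V} : f x = f y ↔ x = y ∨ G.dist x y = 3

namespace IsAntipodalQuotient

variable {V ι : Type*} {G : SimpleGraph V} {f : V → ι} (hf : IsAntipodalQuotient G f)
include hf

theorem apply_ne_of_adj {x y : V} (hxy : G.Adj x y) : f x ≠ f y := by
  rw [Ne, hf.apply_eq_iff, dist_eq_one_iff_adj.2 hxy]
  simp [hxy.ne]

theorem eq_of_adj_of_adj (hG : G.Connected) {x y z : V} (hxy : G.Adj x y)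
    (hxz : G.Adj x z) (hyz : f y = f z) : y = z := by
  refine (hf.apply_eq_iff.1 hyz).resolve_right fun h₃ ↦ ?_
  have := hG.dist_triangle (u := y) (v := x) (w := z)
  rw [dist_eq_one_iff_adj.2 hxy.symm, dist_eq_one_iff_adj.2 hxz] at this
  lia

variable [Fintype V] {b c : ℕ → ℕ} (h : IsDRG G 3 b c)
include h

theorem exists_adj_apply_eq (hb₂ : b 2 = 1) {x : V} {i : ι} (hi : f x ≠ i) :
    ∃ y, G.Adj x y ∧ f y = i := by
  classical
  obtain ⟨y, rfl⟩ := hf.surjective i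
  have hle := h.2.2.1 y x
  rw [Ne, eq_comm, hf.apply_eq_iff, not_or] at hi
  have hpos := h.1.pos_dist_of_ne hi.1
  obtain h₁ | h₂ : G.dist y x = 1 ∨ G.dist y x = 2 := by lia
  · exact ⟨y, (dist_eq_one_iff_adj.1 h₁).symm, rfl⟩
  · obtain ⟨z, hz⟩ := card_pos.1 ((h.card_adj_dist_succ h₂).trans hb₂ ▸ one_pos)
    rw [mem_filter_univ] at hz
    exact ⟨z, hz.1, (hf.apply_eq_iff.2 (.inr hz.2)).symm⟩

theorem card_adj_apply_eq [DecidableEq ι] [DecidableRel G.Adj] (hb₂ : b 2 = 1) (x : V) (i : ι) :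
    #{y | G.Adj x y ∧ f y = i} = if f x = i then 0 else 1 := by
  split_ifs with hi
  · rw [card_eq_zero, filter_eq_empty_iff]
    rintro y - ⟨hxy, rfl⟩
    exact hf.apply_ne_of_adj hxy hi
  · obtain ⟨y, hxy, rfl⟩ := hf.exists_adj_apply_eq h hb₂ hi
    refine card_eq_one.2 ⟨y, eq_singleton_iff_unique_mem.2 ⟨by simpa, fun z hz ↦ ?_⟩⟩
    rw [mem_filter_univ] at hz
    exact hf.eq_of_adj_of_adj h.1 hz.1 hxy hz.2

theorem card_eq [Fintype ι] (hb₂ : b 2 = 1) : Fintype.card ι = b 0 + 1 := by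
  classical
  obtain ⟨x⟩ := h.1.nonempty
  have himage : (G.neighborFinset x).image f = univ.erase (f x) := by
    ext i
    simp only [mem_image, mem_neighborFinset, mem_erase, mem_univ, and_true]
    constructor
    · rintro ⟨y, hxy, rfl⟩
      exact (hf.apply_ne_of_adj hxy).symm
    · exact fun hi ↦ hf.exists_adj_apply_eq h hb₂ hi.symm
  have hinj : Set.InjOn f (G.neighborFinset x) := fun y hy z hz hyz ↦ by
    simp only [coe_neighborFinset, mem_neighborSet] at hy hz
    exact hf.eq_of_adj_of_adj h.1 hy hz hyz
  rw [← h.degree_eq_s15 x, ← G.card_neighborFinset_eq_degree, ← card_image_of_injOn hinj, himage,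
    card_erase_add_one (mem_univ _), card_univ]

variable {r μ : ℕ} (hbc : arr3 b c (r * μ + 1) ((r - 1) * μ) 1 1 μ (r * μ + 1))
include hbc

theorem card_fiber [DecidableEq ι] (hr : 0 < r) (hμ : 0 < μ) (i : ι) : #{x | f x = i} = r := by
  classical
  obtain ⟨hb₀, hb₁, hb₂, hc₁, hc₂, hc₃⟩ := hbc
  obtain ⟨x, rfl⟩ := hf.surjective i
  have sphere₀ : #{y | G.dist x y = 0} = 1 :=
    card_eq_one.2 ⟨x, by ext y; simp [h.1.dist_eq_zero_iff, eq_comm]⟩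
  have sphere₁ : #{y | G.dist x y = 1} = r * μ + 1 := by
    have := h.card_sphere_mul x 0
    rw [sphere₀, hb₀, zero_add, hc₁, one_mul, mul_one] at this
    exact this.symm
  have sphere₂ : #{y | G.dist x y = 2} = (r * μ + 1) * (r - 1) := by
    have := h.card_sphere_mul x 1
    rw [sphere₁, hb₁, hc₂, ← mul_assoc] at this
    exact (Nat.eq_of_mul_eq_mul_right hμ this).symm
  have sphere₃ : #{y | G.dist x y = 3} = r - 1 := by
    have := h.card_sphere_mul x 2
    rw [sphere₂, hb₂, hc₃, mul_one, mul_comm] at this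
    exact (Nat.eq_of_mul_eq_mul_right (Nat.succ_pos _) this).symm
  have hfiber : univ.filter (f · = f x) = insert x (univ.filter (G.dist x · = 3)) := by
    ext y
    simp [hf.apply_eq_iff, G.dist_comm]
  rw [hfiber, card_insert_of_notMem (by simp), sphere₃, Nat.sub_add_cancel hr]

theorem card_commonNeighbors [DecidableEq V] [DecidableEq ι] [DecidableRel G.Adj] (hr : 0 < r)
    (x y : V) : #(G.neighborFinset x ∩ G.neighborFinset y) =
      if x = y then r * μ + 1 else if f x = f y then 0 else μ := by
  obtain ⟨hb₀, hb₁, -, -, hc₂, -⟩ := hbc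
  split_ifs with hxy hfxy
  · rw [hxy, inter_self, G.card_neighborFinset_eq_degree, h.degree_eq_s15, hb₀]
  · rw [card_eq_zero, eq_empty_iff_forall_notMem]
    intro z hz
    simp only [mem_inter, mem_neighborFinset] at hz
    exact hxy (hf.eq_of_adj_of_adj h.1 hz.1.symm hz.2.symm hfxy)
  · have hle := h.2.2.1 x y
    have hpos := h.1.pos_dist_of_ne hxy
    have hne₃ : G.dist x y ≠ 3 := fun h₃ ↦ hfxy (hf.apply_eq_iff.2 (.inr h₃))
    obtain h₁ | h₂ : G.dist x y = 1 ∨ G.dist x y = 2 := by lia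
    · have := h.card_commonNeighbors_of_adj (dist_eq_one_iff_adj.1 h₁)
      rw [hb₀, hb₁, Nat.sub_mul, one_mul] at this
      have := Nat.le_mul_of_pos_left μ hr
      lia
    · rw [h.card_commonNeighbors_of_dist_eq_two h₂, hc₂]

theorem card_eq_mul (hr : 0 < r) (hμ : 0 < μ) : Fintype.card V = r * (r * μ + 2) := by
  classical
  have : Fintype ι := Fintype.ofSurjective f hf.surjective
  rw [← card_univ, card_eq_sum_card_fiberwise (f := f) (t := univ) (by simp),
    sum_congr rfl fun i _ ↦ hf.card_fiber h hbc hr hμ i, sum_const, card_univ,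
    hf.card_eq h hbc.2.2.1, hbc.1, smul_eq_mul, mul_comm]

end IsAntipodalQuotient

section AntipodalMatrices

open Matrix

/-- The incidence matrix between the points of `V` and the fibres of `f`. -/
def fiberMatrix {V ι : Type*} [DecidableEq ι] (f : V → ι) : Matrix V ι ℤ :=
  (1 : Matrix ι ι ℤ).submatrix f id

section FiberMatrix

variable {V ι : Type*} [DecidableEq ι] (f : V → ι)

theorem fiberMatrix_apply (x : V) (i : ι) : fiberMatrix f x i = if f x = i then 1 else 0 :=
  one_apply

theorem fiberMatrix_mul_transpose_apply [Fintype ι] (x y : V) :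
    (fiberMatrix f * (fiberMatrix f)ᵀ) x y = if f x = f y then 1 else 0 := by
  simp [mul_apply, fiberMatrix_apply]

variable {f} [Fintype V]

theorem transpose_fiberMatrix_mul {r : ℕ} (hr : ∀ i, #{x | f x = i} = r) :
    (fiberMatrix f)ᵀ * fiberMatrix f = (r : ℤ) • 1 := by
  ext i j
  rw [mul_apply]
  simp only [transpose_apply, fiberMatrix_apply, ite_zero_mul_ite_zero, mul_one, sum_boole]
  rw [Matrix.smul_apply, one_apply]
  split_ifs with hij
  · simp [hij, hr]
  · have hempty : ({x | f x = i ∧ f x = j} : Finset V) = ∅ :=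
      filter_eq_empty_iff.2 fun x _ hx ↦ hij (hx.1.symm.trans hx.2)
    simp [hempty]

end FiberMatrix

theorem adjMatrix_mul_self_apply {V : Type*} [Fintype V] [DecidableEq V] (G : SimpleGraph V)
    [DecidableRel G.Adj] (x y : V) :
    (G.adjMatrix ℤ * G.adjMatrix ℤ) x y = #(G.neighborFinset x ∩ G.neighborFinset y) := by
  rw [adjMatrix_mul_apply]
  simp only [adjMatrix_apply, sum_boole, ← filter_mem_eq_inter]
  simp [G.adj_comm]

/-- The matrix `rA - J`. For an antipodal `r`-cover of a complete graph it acts as `-r` on the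
vectors constant on fibres, and as `rA` on their orthogonal complement. -/
def scaledAdjSubOne {V : Type*} (G : SimpleGraph V) [DecidableRel G.Adj] (r : ℕ) :
    Matrix V V ℤ :=
  (r : ℤ) • G.adjMatrix ℤ - of fun _ _ ↦ 1

theorem isSymm_scaledAdjSubOne {V : Type*} (G : SimpleGraph V) [DecidableRel G.Adj] (r : ℕ) :
    (scaledAdjSubOne G r).IsSymm :=
  (G.isSymm_adjMatrix.smul _).sub rfl

/-- The matrix `scaledAdjSubOne G r`, bordered by the fibre incidence matrix so that its eigenvalue
`-r` on vectors constant on fibres is replaced by the eigenvalues `±r√(rμ+1)` it has elsewhere. -/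
def borderedMatrix {V ι : Type*} [DecidableEq ι] (G : SimpleGraph V) [DecidableRel G.Adj]
    (f : V → ι) (r μ : ℕ) : Matrix (V ⊕ ι) (V ⊕ ι) ℤ :=
  fromBlocks (scaledAdjSubOne G r) ((r * μ : ℤ) • fiberMatrix f)
    ((r : ℤ) • (fiberMatrix f)ᵀ) ((r : ℤ) • 1)

/-- The Gram matrix `I_V ⊕ μ I_ι` of the form for which `borderedMatrix` is self-adjoint. -/
def borderForm (V ι : Type*) [DecidableEq V] [DecidableEq ι] (μ : ℕ) :
    Matrix (V ⊕ ι) (V ⊕ ι) ℤ :=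
  fromBlocks 1 0 0 ((μ : ℤ) • 1)

section BorderForm

variable {V ι : Type*} [DecidableEq V] [DecidableEq ι]

theorem isSymm_borderForm (μ : ℕ) : (borderForm V ι μ).IsSymm := by
  simp [borderForm, IsSymm, fromBlocks_transpose]

variable [Fintype V] [Fintype ι]

theorem det_borderForm (μ : ℕ) : (borderForm V ι μ).det = (μ : ℤ) ^ Fintype.card ι := by
  rw [borderForm, det_fromBlocks_zero₂₁, det_smul, det_one, det_one, one_mul, mul_one]

theorem isSelfAdjoint_borderedMatrix (G : SimpleGraph V) [DecidableRel G.Adj] (f : V → ι)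
    (r μ : ℕ) : (borderForm V ι μ).IsSelfAdjoint (borderedMatrix G f r μ) := by
  rw [Matrix.IsSelfAdjoint, Matrix.IsAdjointPair]
  simp only [borderForm, borderedMatrix, fromBlocks_transpose, fromBlocks_multiply, transpose_smul,
    transpose_one, transpose_transpose, (isSymm_scaledAdjSubOne G r).eq, Matrix.mul_zero,
    Matrix.zero_mul, Matrix.mul_one, Matrix.one_mul, smul_zero, add_zero, zero_add,
    Matrix.smul_mul, Matrix.mul_smul, smul_smul, mul_comm]

end BorderForm

namespace IsAntipodalQuotient

variable {V ι : Type*} [Fintype V] [DecidableEq ι] {G : SimpleGraph V} [DecidableRel G.Adj]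
  {f : V → ι} {b c : ℕ → ℕ} {r μ : ℕ} (hf : IsAntipodalQuotient G f) (h : IsDRG G 3 b c)
  (hbc : arr3 b c (r * μ + 1) ((r - 1) * μ) 1 1 μ (r * μ + 1)) (hr : 0 < r) (hμ : 0 < μ)
include hf h hbc hr

theorem adjMatrix_mul_self [DecidableEq V] [Fintype ι] :
    G.adjMatrix ℤ * G.adjMatrix ℤ =
      (r * μ + 1 : ℤ) • 1 + (μ : ℤ) • (of (fun _ _ ↦ 1) - fiberMatrix f * (fiberMatrix f)ᵀ) := by
  ext x y
  rw [adjMatrix_mul_self_apply, hf.card_commonNeighbors h hbc hr]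
  simp only [Matrix.add_apply, Matrix.smul_apply, Matrix.sub_apply,
    fiberMatrix_mul_transpose_apply, one_apply, of_apply]
  split_ifs with hxy hfxy hfxy
  · simp
  · exact absurd (congrArg f hxy) hfxy
  · simp
  · simp

include hμ

theorem scaledAdjSubOne_mul_fiberMatrix :
    scaledAdjSubOne G r * fiberMatrix f = -(r : ℤ) • fiberMatrix f := by
  ext x i
  have hadj : (G.adjMatrix ℤ * fiberMatrix f) x i = if f x = i then 0 else 1 := by
    simpa [mul_apply, adjMatrix_apply, fiberMatrix_apply, ← ite_and, and_comm] using
      congrArg (Nat.cast (R := ℤ)) (hf.card_adj_apply_eq h hbc.2.2.1 x i)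
  have hone : ((of fun _ _ ↦ 1 : Matrix V V ℤ) * fiberMatrix f) x i = r := by
    simp [mul_apply, fiberMatrix_apply, hf.card_fiber h hbc hr hμ i]
  simp only [scaledAdjSubOne, Matrix.sub_mul, Matrix.smul_mul, Matrix.sub_apply,
    Matrix.smul_apply, hadj, hone, fiberMatrix_apply]
  split_ifs <;> simp

theorem scaledAdjSubOne_mul_self [DecidableEq V] [Fintype ι] :
    scaledAdjSubOne G r * scaledAdjSubOne G r =
      (r ^ 2 * (r * μ + 1) : ℤ) • 1 - (r ^ 2 * μ : ℤ) • (fiberMatrix f * (fiberMatrix f)ᵀ) := by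
  set J : Matrix V V ℤ := of fun _ _ ↦ 1 with hJ
  have hAJ : G.adjMatrix ℤ * J = (r * μ + 1 : ℤ) • J := by
    ext x y
    rw [adjMatrix_mul_apply]
    simp [hJ, h.degree_eq_s15, hbc.1]
  have hJA : J * G.adjMatrix ℤ = (r * μ + 1 : ℤ) • J := by
    have := congrArg transpose hAJ
    rwa [transpose_mul, transpose_adjMatrix, transpose_smul, show Jᵀ = J from rfl] at this
  have hJJ : J * J = (r * (r * μ + 2) : ℤ) • J := by
    ext x y
    simp [hJ, mul_apply, hf.card_eq_mul h hbc hr hμ]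
  have hexpand : scaledAdjSubOne G r * scaledAdjSubOne G r =
      (r ^ 2 : ℤ) • (G.adjMatrix ℤ * G.adjMatrix ℤ) -
        (r : ℤ) • (G.adjMatrix ℤ * J + J * G.adjMatrix ℤ) + J * J := by
    rw [scaledAdjSubOne, ← hJ]
    simp only [Matrix.sub_mul, Matrix.mul_sub, Matrix.smul_mul, Matrix.mul_smul]
    module
  rw [hexpand, hAJ, hJA, hJJ, hf.adjMatrix_mul_self h hbc hr]
  module

theorem borderedMatrix_mul_self [DecidableEq V] [Fintype ι] :
    borderedMatrix G f r μ * borderedMatrix G f r μ = (r ^ 2 * (r * μ + 1) : ℤ) • 1 := by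
  set S := scaledAdjSubOne G r with hS
  set P := fiberMatrix f with hP
  have hSP : S * P = -(r : ℤ) • P := hf.scaledAdjSubOne_mul_fiberMatrix h hbc hr hμ
  have hPS : Pᵀ * S = -(r : ℤ) • Pᵀ := by
    have := congrArg transpose hSP
    rwa [transpose_mul, (isSymm_scaledAdjSubOne G r).eq, transpose_smul] at this
  have hPP : Pᵀ * P = (r : ℤ) • 1 := transpose_fiberMatrix_mul (hf.card_fiber h hbc hr hμ)
  have hSS : S * S = (r ^ 2 * (r * μ + 1) : ℤ) • 1 - (r ^ 2 * μ : ℤ) • (P * Pᵀ) :=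
    hf.scaledAdjSubOne_mul_self h hbc hr hμ
  rw [borderedMatrix, fromBlocks_multiply, ← hS, ← hP, ← fromBlocks_one, fromBlocks_smul]
  simp only [Matrix.smul_mul, Matrix.mul_smul, hSP, hPS, hPP, hSS, Matrix.one_mul, Matrix.mul_one]
  congr 1 <;> module

end IsAntipodalQuotient

theorem IsDRG.isSquare_of_antipodal {V : Type*} [Fintype V] {G : SimpleGraph V} {b c : ℕ → ℕ}
    (h : IsDRG G 3 b c) {r μ p : ℕ} [Fact p.Prime]
    (hbc : arr3 b c (r * μ + 1) ((r - 1) * μ) 1 1 μ (r * μ + 1))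
    (hp : p ∣ r * μ + 1) (hp' : ¬ p ^ 2 ∣ r * μ + 1) :
    IsSquare ((-1) ^ ((r + 1) * (r * μ + 2) / 2) * (μ : ZMod p) ^ (r * μ + 2)) := by
  classical
  have hprime : p.Prime := Fact.out
  have hr : 0 < r := Nat.pos_of_ne_zero fun hr ↦ hprime.one_lt.ne' (by simpa [hr] using hp)
  have hμ : 0 < μ := Nat.pos_of_ne_zero fun hμ ↦ hprime.one_lt.ne' (by simpa [hμ] using hp)
  let fibers := h.antipodalSetoid hbc.2.2.1 (hbc.2.2.2.2.2.trans hbc.1.symm)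
  have hf : IsAntipodalQuotient G (Quotient.mk fibers) :=
    ⟨Quotient.mk_surjective, Quotient.eq⟩
  have hpr : (p ^ 2).Coprime (r ^ 2) := by
    refine Nat.Coprime.pow _ _ ((Nat.Prime.coprime_iff_not_dvd hprime).2 fun hpr ↦ ?_)
    exact hprime.one_lt.ne' (Nat.dvd_one.1 ((Nat.dvd_add_right (hpr.mul_right μ)).1 hp))
  have hdvd : (p : ℤ) ∣ r ^ 2 * (r * μ + 1) := by exact_mod_cast hp.mul_left _
  have hndvd : ¬ (p : ℤ) ^ 2 ∣ r ^ 2 * (r * μ + 1) := by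
    exact_mod_cast mt hpr.dvd_of_dvd_mul_left hp'
  have hcard : Fintype.card (V ⊕ Quotient fibers) = (r + 1) * (r * μ + 2) := by
    rw [Fintype.card_sum, hf.card_eq_mul h hbc hr hμ, hf.card_eq h hbc.2.2.1, hbc.1]
    ring
  have hsquare := isSquare_det_of_isSelfAdjoint_of_mul_self_eq_smul (isSymm_borderForm μ)
    (isSelfAdjoint_borderedMatrix G _ r μ) (hf.borderedMatrix_mul_self h hbc hr hμ) hdvd hndvd
  rwa [hcard, det_borderForm, hf.card_eq h hbc.2.2.1, hbc.1, Int.cast_pow, Int.cast_natCast]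
    at hsquare

end AntipodalMatrices

theorem statement15_general {V : Type*} [Fintype V] (G : SimpleGraph V) (b c : ℕ → ℕ)
    (hdrg : IsDRG G 3 b c) :
    ¬ (arr3 b c 10 6 1 1 3 10 ∨
       arr3 b c 27 16 4 1 2 24 ∨
       arr3 b c 45 28 4 1 2 42 ∨
       arr3 b c 65 40 16 1 4 50) := by
  rintro (hbc | ⟨hb₀, hb₁, -, -, hc₂, -⟩ | ⟨hb₀, hb₁, -, -, hc₂, -⟩ | ⟨hb₀, hb₁, -, -, hc₂, -⟩)
  · have not_isSquare :
        ¬ IsSquare ((-1) ^ ((3 + 1) * (3 * 3 + 2) / 2) * ((3 : ℕ) : ZMod 5) ^ (3 * 3 + 2)) := by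
      decide
    have : Fact (Nat.Prime 5) := ⟨Nat.prime_five⟩
    exact not_isSquare (hdrg.isSquare_of_antipodal hbc (by norm_num) (by norm_num))
  all_goals
    have claw_bound := hdrg.mul_sub_le (t := 3)
    simp [hb₀, hb₁, hc₂, Nat.choose] at claw_bound

/-- there is no 4-claw-free DRG of diameter 3 with intersection array
`{10,6,1;1,3,10}`, `{27,16,4;1,2,24}`, `{45,28,4;1,2,42}` or `{65,40,16;1,4,50}`. -/
theorem statement15 {V : Type*} [Fintype V] (G : SimpleGraph V) (b c : ℕ → ℕ)
    (hdrg : IsDRG G 3 b c) (hclaw : ¬ HasClaw G 4) :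
    ¬ (arr3 b c 10 6 1 1 3 10 ∨
       arr3 b c 27 16 4 1 2 24 ∨
       arr3 b c 45 28 4 1 2 42 ∨
       arr3 b c 65 40 16 1 4 50) :=
  statement15_general G b c hdrg
end
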